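/- Let 1 ≤ p < 2, let ν be a positive integer, and let {X_{m,n} : m ≥ 1, n ≥ 1} be a double array of random variables satisfying Condition (H_2). If sup_{m≥1, n≥1} E( |X_{m,n}|^p log_ν^{(2)}|X_{m,n}| ) < ∞, then E[ ( max_{u≤m, v≤n} |∑_{i=1}^{u} ∑_{j=1}^{v} (X_{i,j} − E X_{i,j})| / (mn)^{1/p} )^p ] → 0 as max(m, n) → ∞ (convergence in mean of order p). -/

import Mathlib

/-!
Write `X = X⁺ - X⁻`. Each part is a monotone image of the array up to sign, so Condition `(H_2)` gives
for every monotone truncation of it a variance bound over rectangles: the centred sum over a `u × w`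
rectangle has second moment at most a constant times `u * w` times the largest second moment of a
summand (`RectVar`, `rectVar_of_monotone`, `rectVar_of_antitone`). Bounding maxima over partial
rectangles by this alone, in the manner of Rademacher–Menshov, would lose logarithmic factors.

The loss is avoided by a chaining over dyadic scales adapted to the heavy tails
(`chain_bound_two`): a dyadic block with `2 ^ k` elements is summed after truncation at the level
`2 ^ (k / p)`. For complete blocks at a given scale, the squares of the centred sums have a total
expectation of order `2 ^ (M + N) * 2 ^ (k (2 - p) / p)`, which decreases geometrically below the top
scale `k = M + N` because `p < 2`. Changing the truncation from one level to the next produces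
nonnegative increments, whose partial sums are controlled by complete block sums and means
(`abs_partial_sum_le`). Summing over the scales gives a maximal inequality in `L ^ 2` for variables
truncated at the level of the whole rectangle (`max_trunc_sq`).

What exceeds that level is treated without any maximal inequality, being nonnegative. The `p`-th
moment of its total sum is computed from truncated second moments at the levels
`2 ^ ((M + N) / p + j)`, and these are bounded as soon as the tails `x ^ p * P(W > x)` are summable
over those levels (`excess_rpow`). The moment hypothesis gives such tails since
`∑ j, 1 / logNu2 ν (2 ^ j)` converges, by iterated Cauchy condensation (`summable_logNu2`). Together
these give a `p`-th moment of the maximum of order `2 ^ (M + N)` (`maximal_rpow`).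

To improve the order `O` to `o`, each part is cut at a fixed high level `A` (`one_sided`). The part
below `A` is bounded, so the maximal inequality holds for it with the exponent `(p + 2) / 2 > p` and
contributes `o (2 ^ (M + N))` in the mean of order `p`; the excess over `A` has uniformly small `p`-th
moments and summable tails, so after rescaling it contributes a small multiple of `2 ^ (M + N)`.
-/

open MeasureTheory ProbabilityTheory Finset Filter
open scoped NNReal ENNReal

noncomputable section

/-- `rlog x` is the natural logarithm of `max x 2`. -/
def rlog (x : ℝ) : ℝ := Real.log (max x 2)

/-- `itlog k x` is the `k`-fold iterate of `rlog` applied to `x`. -/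
def itlog : ℕ → ℝ → ℝ
  | 0, x => x
  | k + 1, x => rlog (itlog k x)

/-- `logNu2 ν x = (log x)(log log x) ⋯ (log ⋯ log x)²`, the product of the first `ν`
iterated logarithms of `x`, with the last (`ν`-fold iterated) factor squared. -/
def logNu2 (ν : ℕ) (x : ℝ) : ℝ := (∏ k ∈ Finset.Icc 1 ν, itlog k x) * itlog ν x

/-- The maximum of the (nonnegative) values `g i j` over `1 ≤ i ≤ M`, `1 ≤ j ≤ N`. -/
def maxNN (M N : ℕ) (g : ℕ → ℕ → ℝ) : ℝ :=
  (((Finset.Icc 1 M ×ˢ Finset.Icc 1 N).sup fun p => Real.toNNReal (g p.1 p.2) : ℝ≥0) : ℝ)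

/-- `maxDS f m n = max_{1 ≤ u ≤ m, 1 ≤ v ≤ n} |∑_{i=1}^{u} ∑_{j=1}^{v} f i j|`. -/
def maxDS (f : ℕ → ℕ → ℝ) (m n : ℕ) : ℝ :=
  maxNN m n fun u v => |∑ i ∈ Finset.Icc 1 u, ∑ j ∈ Finset.Icc 1 v, f i j|

/-- Index set of a doubly-indexed array: pairs of indices that are both at least `1`. -/
abbrev PIdx : Type := {k : ℕ × ℕ // 1 ≤ k.1 ∧ 1 ≤ k.2}

/-- Condition (H_{2q}) with a given constant `C`: for every finite subfamily and every
family of nondecreasing functions (whose relevant expectations are finite),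
`E|∑ (f_λ(X_λ) - E f_λ(X_λ))|^{2q}
   ≤ C (|I| max E|f_λ(X_λ)|^{2q} + |I|^q max (E f_λ(X_λ)²)^q)`. -/
def CondHWith {Ω : Type*} [MeasureSpace Ω] {Λ : Type*} (q C : ℝ) (X : Λ → Ω → ℝ) : Prop :=
  ∀ (I : Finset Λ) (hI : I.Nonempty) (f : Λ → ℝ → ℝ),
    (∀ l ∈ I, Monotone (f l)) →
    (∀ l ∈ I, Integrable fun ω => f l (X l ω)) →
    (∀ l ∈ I, Integrable fun ω => (f l (X l ω)) ^ 2) →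
    (∀ l ∈ I, Integrable fun ω => |f l (X l ω)| ^ (2 * q)) →
    (Integrable fun ω => |∑ l ∈ I, (f l (X l ω) - ∫ ω', f l (X l ω'))| ^ (2 * q)) →
    ∫ ω, |∑ l ∈ I, (f l (X l ω) - ∫ ω', f l (X l ω'))| ^ (2 * q) ≤
      C * ((I.card : ℝ) * I.sup' hI (fun l => ∫ ω, |f l (X l ω)| ^ (2 * q)) +
           (I.card : ℝ) ^ q * I.sup' hI fun l => (∫ ω, (f l (X l ω)) ^ 2) ^ q)

/-- Condition (H_{2q}): there is a finite constant for which `CondHWith` holds. -/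
def CondH {Ω : Type*} [MeasureSpace Ω] {Λ : Type*} (q : ℝ) (X : Λ → Ω → ℝ) : Prop :=
  ∃ C : ℝ, CondHWith q C X

/-- The family `X` is stochastically dominated by the random variable `Y`:
`sup_λ P(|X_λ| > x) ≤ P(|Y| > x)` for every real `x`. -/
def StochDom {Ω : Type*} [MeasureSpace Ω] {Λ : Type*} (X : Λ → Ω → ℝ) (Y : Ω → ℝ) : Prop :=
  ∀ x : ℝ, ∀ l : Λ, volume {ω | x < |X l ω|} ≤ volume {ω | x < |Y ω|}

/-- Uniform integrability: `sup_λ E(|Y_λ| 1(|Y_λ| > a)) → 0` as `a → ∞`. -/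
def UnifInt {Ω : Type*} [MeasureSpace Ω] {Λ : Type*} (Y : Λ → Ω → ℝ) : Prop :=
  (∀ l, Integrable (Y l)) ∧
  ∀ ε : ℝ, 0 < ε → ∃ a : ℝ, ∀ l, ∫ ω, (if a < |Y l ω| then |Y l ω| else 0) ≤ ε

/-- A slowly varying function: positive and measurable on `[0,∞)` with
`L(cx)/L(x) → 1` as `x → ∞` for every `c > 0`. -/
def SlowlyVarying (L : ℝ → ℝ) : Prop :=
  Measurable L ∧ (∀ x : ℝ, 0 ≤ x → 0 < L x) ∧
  ∀ c : ℝ, 0 < c → Tendsto (fun x => L (c * x) / L x) atTop (nhds 1)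

/-- `Lt` is a de Bruijn conjugate of `L`. -/
def DeBruijnConjugate (L Lt : ℝ → ℝ) : Prop :=
  SlowlyVarying Lt ∧
  Tendsto (fun x => L x * Lt (x * L x)) atTop (nhds 1) ∧
  Tendsto (fun x => Lt x * L (x * Lt x)) atTop (nhds 1)

/-- Truncation from above at level `b (2^s)`:
`X_{i,j} 1(X_{i,j} ≤ b_{2^s}) + b_{2^s} 1(X_{i,j} > b_{2^s})`. -/
def truncUp {Ω : Type*} (X : ℕ → ℕ → Ω → ℝ) (b : ℕ → ℝ) (s i j : ℕ) (ω : Ω) : ℝ :=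
  if X i j ω ≤ b (2 ^ s) then X i j ω else b (2 ^ s)

/-- Two-sided truncation at level `b (2^s)`:
`-b_{2^s} 1(X < -b_{2^s}) + X 1(|X| ≤ b_{2^s}) + b_{2^s} 1(X > b_{2^s})`. -/
def truncTwo {Ω : Type*} (X : ℕ → ℕ → Ω → ℝ) (b : ℕ → ℝ) (s i j : ℕ) (ω : Ω) : ℝ :=
  if X i j ω < -b (2 ^ s) then -b (2 ^ s)
  else if b (2 ^ s) < X i j ω then b (2 ^ s) else X i j ω

/-! ### Deterministic chaining over dyadic rectangles -/

/-- One-dimensional chaining. Row `x t` is the sequence truncated at level `t`, `α t` bounds its sums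
over complete dyadic blocks of length `2 ^ t`, and `β t` bounds the price of replacing level `t`
by level `t + 1` on any initial part of such a block. Following the binary expansion of `w`, each
dyadic piece of length `2 ^ r` is summed at its own level `r`, and two halves are lowered at each
scale, so that a sum of `w` terms is bounded by a single sum over the scales. -/
lemma chain_bound_lt (x : ℕ → ℕ → ℝ) (α β : ℕ → ℝ) (N : ℕ)
    (hα0 : ∀ t, 0 ≤ α t)
    (hα : ∀ t ≤ N, ∀ a < 2 ^ (N - t), |∑ j ∈ range (2 ^ t), x t (a * 2 ^ t + j)| ≤ α t)
    (hβ : ∀ t ≤ N, ∀ a < 2 ^ (N - t), ∀ w ≤ 2 ^ t,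
      |∑ j ∈ range w, (x (t + 1) (a * 2 ^ t + j) - x t (a * 2 ^ t + j))| ≤ β t) :
    ∀ t ≤ N, ∀ a < 2 ^ (N - t), ∀ w < 2 ^ t,
      |∑ j ∈ range w, x t (a * 2 ^ t + j)| ≤ ∑ r ∈ range t, (α r + 2 * β r) := by
  intro t
  induction t with
  | zero =>
    intro ht a ha w hw
    have : w = 0 := by simpa using hw
    subst this
    simp
  | succ t ih =>
    intro ht a ha w hw
    have ht' : t ≤ N := by omega
    have e1 : 2 ^ (N - t) = 2 * 2 ^ (N - (t + 1)) := by
      rw [← pow_succ']; congr 1; omega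
    have hl : 2 * a < 2 ^ (N - t) := by omega
    have hr : 2 * a + 1 < 2 ^ (N - t) := by omega
    have hs : a * 2 ^ (t + 1) = 2 * a * 2 ^ t := by ring
    have hβ0 : 0 ≤ β t := (abs_nonneg _).trans (hβ t ht' _ hl 0 (Nat.zero_le _))
    have hα0' := hα0 t
    -- lowering the level inside a block of length `2 ^ t` costs `β t`
    have key : ∀ d < 2 ^ (N - t), ∀ w ≤ 2 ^ t, ∀ y,
        |∑ j ∈ range w, x t (d * 2 ^ t + j)| ≤ y →
        |∑ j ∈ range w, x (t + 1) (d * 2 ^ t + j)| ≤ y + β t := by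
      intro d hd w hw y hy
      have h1 := hβ t ht' d hd w hw
      have h3 : ∑ j ∈ range w, x (t + 1) (d * 2 ^ t + j)
          = ∑ j ∈ range w, x t (d * 2 ^ t + j)
            + ∑ j ∈ range w, (x (t + 1) (d * 2 ^ t + j) - x t (d * 2 ^ t + j)) := by
        rw [← Finset.sum_add_distrib]; exact Finset.sum_congr rfl fun _ _ => by ring
      rw [h3]
      exact (abs_add_le _ _).trans (add_le_add hy h1)
    rw [Finset.sum_range_succ]
    by_cases hw2 : w < 2 ^ t
    · have := key (2 * a) hl w hw2.le _ (ih ht' _ hl w hw2)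
      rw [hs]
      linarith
    · obtain ⟨w', rfl⟩ : ∃ w', w = 2 ^ t + w' := ⟨w - 2 ^ t, by omega⟩
      have hw' : w' < 2 ^ t := by rw [pow_succ] at hw; omega
      rw [Finset.sum_range_add, hs]
      have h1 := key (2 * a) hl _ le_rfl _ (hα t ht' _ hl)
      have h2 := key (2 * a + 1) hr w' hw'.le _ (ih ht' _ hr w' hw')
      have h3 : ∀ j, 2 * a * 2 ^ t + (2 ^ t + j) = (2 * a + 1) * 2 ^ t + j := fun j => by ring
      simp only [h3]
      have := abs_add_le (∑ j ∈ range (2 ^ t), x (t + 1) (2 * a * 2 ^ t + j))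
        (∑ j ∈ range w', x (t + 1) ((2 * a + 1) * 2 ^ t + j))
      linarith

/-- `chain_bound_lt` at the top scale, with the complete block `w = 2 ^ N` included. -/
lemma chain_bound (x : ℕ → ℕ → ℝ) (α β : ℕ → ℝ) (N : ℕ)
    (hα0 : ∀ t, 0 ≤ α t)
    (hα : ∀ t ≤ N, ∀ a < 2 ^ (N - t), |∑ j ∈ range (2 ^ t), x t (a * 2 ^ t + j)| ≤ α t)
    (hβ : ∀ t ≤ N, ∀ a < 2 ^ (N - t), ∀ w ≤ 2 ^ t,
      |∑ j ∈ range w, (x (t + 1) (a * 2 ^ t + j) - x t (a * 2 ^ t + j))| ≤ β t) :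
    ∀ w ≤ 2 ^ N, |∑ j ∈ range w, x N j| ≤ ∑ r ∈ range (N + 1), (α r + 2 * β r) := by
  intro w hw
  have hβ0 : ∀ t ≤ N, 0 ≤ β t := fun t ht =>
    (abs_nonneg _).trans (hβ t ht 0 (by positivity) 0 (Nat.zero_le _))
  have hpos : 0 ≤ ∑ r ∈ range N, (α r + 2 * β r) := Finset.sum_nonneg fun r hr => by
    have := hα0 r
    have := hβ0 r (by simp at hr; omega)
    linarith
  have hN := hβ0 N le_rfl
  have hN' := hα0 N
  rw [Finset.sum_range_succ]
  rcases hw.lt_or_eq with hw | rfl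
  · have := chain_bound_lt x α β N hα0 hα hβ N le_rfl 0 (by positivity) w hw
    simp only [zero_mul, zero_add] at this
    linarith
  · have := hα N le_rfl 0 (by positivity)
    simp only [zero_mul, zero_add] at this
    linarith

/-- Two-dimensional chaining, the level of a `2 ^ s × 2 ^ t` block being `s + t`: `chain_bound` is
applied along the second coordinate for each complete row block, and then along the first. Only one
level is crossed at each step, so one bound `β` for partial rectangles serves both directions. -/
lemma chain_bound_two (D : ℕ → ℕ → ℕ → ℝ) (α β : ℕ → ℕ → ℝ) (M N : ℕ)
    (hα0 : ∀ s t, 0 ≤ α s t) (hβ0 : ∀ s t, 0 ≤ β s t)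
    (hα : ∀ s ≤ M, ∀ t ≤ N, ∀ a < 2 ^ (M - s), ∀ b < 2 ^ (N - t),
      |∑ i ∈ range (2 ^ s), ∑ j ∈ range (2 ^ t), D (s + t) (a * 2 ^ s + i) (b * 2 ^ t + j)|
        ≤ α s t)
    (hβ : ∀ s ≤ M, ∀ t ≤ N, ∀ a < 2 ^ (M - s), ∀ b < 2 ^ (N - t), ∀ u ≤ 2 ^ s, ∀ w ≤ 2 ^ t,
      |∑ i ∈ range u, ∑ j ∈ range w, (D (s + t + 1) (a * 2 ^ s + i) (b * 2 ^ t + j)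
        - D (s + t) (a * 2 ^ s + i) (b * 2 ^ t + j))| ≤ β s t) :
    ∀ u ≤ 2 ^ M, ∀ v ≤ 2 ^ N, |∑ i ∈ range u, ∑ j ∈ range v, D (M + N) i j|
      ≤ ∑ s ∈ range (M + 1), ∑ t ∈ range (N + 1), (α s t + 4 * β s t) := by
  intro u hu v hv
  have inner : ∀ s ≤ M, ∀ a < 2 ^ (M - s),
      |∑ i ∈ range (2 ^ s), ∑ j ∈ range v, D (s + N) (a * 2 ^ s + i) j|
        ≤ ∑ t ∈ range (N + 1), (α s t + 2 * β s t) := by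
    intro s hs a ha
    rw [Finset.sum_comm]
    refine chain_bound (fun t j => ∑ i ∈ range (2 ^ s), D (s + t) (a * 2 ^ s + i) j)
      (α s) (β s) N (hα0 s) ?_ ?_ v hv
    · intro t ht b hb
      have := hα s hs t ht a ha b hb
      rwa [Finset.sum_comm] at this
    · intro t ht b hb w hw
      have := hβ s hs t ht a ha b hb _ le_rfl w hw
      rw [Finset.sum_comm] at this
      simp only [← Finset.sum_sub_distrib]
      exact this
  have outer := chain_bound (fun s i => ∑ j ∈ range v, D (s + N) i j)
      (fun s => ∑ t ∈ range (N + 1), (α s t + 2 * β s t)) (fun s => β s N) M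
      (fun s => Finset.sum_nonneg fun t _ => by have := hα0 s t; have := hβ0 s t; linarith)
      inner ?_ u hu
  · refine outer.trans (Finset.sum_le_sum fun s _ => ?_)
    have h1 : β s N ≤ ∑ t ∈ range (N + 1), β s t :=
      Finset.single_le_sum (f := β s) (fun t _ => hβ0 s t) (by simp)
    have h2 : ∑ t ∈ range (N + 1), (α s t + 4 * β s t)
        = ∑ t ∈ range (N + 1), (α s t + 2 * β s t) + 2 * ∑ t ∈ range (N + 1), β s t := by
      rw [Finset.mul_sum, ← Finset.sum_add_distrib]
      exact Finset.sum_congr rfl fun _ _ => by ring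
    rw [h2]; linarith
  · intro s hs a ha w hw
    have := hβ s hs N le_rfl a ha 0 (by positivity) w hw v hv
    simp only [zero_mul, zero_add] at this
    simp only [← Finset.sum_sub_distrib, Nat.add_right_comm s 1 N]
    exact this

/-- Centred partial sums of nonnegative terms are controlled by the complete centred sum and the
total mean, with no maximal inequality: the uncentred sums are monotone in the rectangle. -/
lemma abs_partial_sum_le (Z e : ℕ → ℕ → ℝ) (hZ : ∀ i j, 0 ≤ Z i j) (he : ∀ i j, 0 ≤ e i j)
    {u U v V : ℕ} (hu : u ≤ U) (hv : v ≤ V) :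
    |∑ i ∈ range u, ∑ j ∈ range v, (Z i j - e i j)|
      ≤ |∑ i ∈ range U, ∑ j ∈ range V, (Z i j - e i j)|
        + ∑ i ∈ range U, ∑ j ∈ range V, e i j := by
  have mono : ∀ F : ℕ → ℕ → ℝ, (∀ i j, 0 ≤ F i j) →
      ∑ i ∈ range u, ∑ j ∈ range v, F i j ≤ ∑ i ∈ range U, ∑ j ∈ range V, F i j := by
    intro F hF
    calc ∑ i ∈ range u, ∑ j ∈ range v, F i j ≤ ∑ i ∈ range u, ∑ j ∈ range V, F i j :=
          Finset.sum_le_sum fun i _ => Finset.sum_le_sum_of_subset_of_nonneg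
            (Finset.range_subset_range.2 hv) fun j _ _ => hF i j
      _ ≤ _ := Finset.sum_le_sum_of_subset_of_nonneg
            (Finset.range_subset_range.2 hu) fun i _ _ => Finset.sum_nonneg fun j _ => hF i j
  have nn : ∀ F : ℕ → ℕ → ℝ, (∀ i j, 0 ≤ F i j) → ∀ u v,
      0 ≤ ∑ i ∈ range u, ∑ j ∈ range v, F i j :=
    fun F hF u v => Finset.sum_nonneg fun i _ => Finset.sum_nonneg fun j _ => hF i j
  have h1 := mono Z hZ
  have h2 := mono e he
  have h3 := nn Z hZ u v
  have h4 := nn e he u v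
  simp only [Finset.sum_sub_distrib] at *
  have h5 := le_abs_self (∑ i ∈ range U, ∑ j ∈ range V, Z i j - ∑ i ∈ range U, ∑ j ∈ range V, e i j)
  have h6 := abs_nonneg (∑ i ∈ range U, ∑ j ∈ range V, Z i j - ∑ i ∈ range U, ∑ j ∈ range V, e i j)
  rw [abs_le]
  constructor <;> linarith

/-! ### Truncation levels and the geometric gain between scales -/

lemma min_sq_le {p w c : ℝ} (hp2 : p < 2) (hp1 : 1 ≤ p) (hw : 0 ≤ w) (hc : 0 < c) :
    (min w c) ^ 2 ≤ c ^ (2 - p) * w ^ p := by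
  rcases hw.eq_or_lt with rfl | hw
  · rw [min_eq_left hc.le, Real.zero_rpow (by linarith)]; simp
  · have hm : 0 < min w c := lt_min hw hc
    calc (min w c) ^ 2 = (min w c) ^ (2 - p) * (min w c) ^ p := by
          rw [← Real.rpow_add hm, sub_add_cancel]; norm_cast
      _ ≤ _ := by
          have h1 := Real.rpow_le_rpow hm.le (min_le_right w c) (by linarith : 0 ≤ 2 - p)
          have h2 := Real.rpow_le_rpow hm.le (min_le_left w c) (by linarith : 0 ≤ p)
          gcongr

lemma excess_le {p w c : ℝ} (hp1 : 1 ≤ p) (hw : 0 ≤ w) (hc : 0 < c) :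
    w - min w c ≤ c ^ (1 - p) * w ^ p := by
  rcases le_total w c with h | h
  · rw [min_eq_left h, sub_self]; positivity
  · rw [min_eq_right h]
    have hw' : 0 < w := hc.trans_le h
    calc w - c ≤ w ^ (1 - p) * w ^ p := by
          rw [← Real.rpow_add hw', sub_add_cancel, Real.rpow_one]; linarith
      _ ≤ _ := by
          have := Real.rpow_le_rpow_of_nonpos hc h (by linarith : 1 - p ≤ 0)
          gcongr

/-- The truncation level `2 ^ (k / p)` attached to dyadic blocks with `2 ^ k` elements. -/
def lvl (p : ℝ) (k : ℕ) : ℝ := (2 : ℝ) ^ ((k : ℝ) / p)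

lemma lvl_pos (p : ℝ) (k : ℕ) : 0 < lvl p k := by unfold lvl; positivity

lemma one_le_lvl {p : ℝ} (hp1 : 1 ≤ p) (k : ℕ) : 1 ≤ lvl p k :=
  Real.one_le_rpow (by norm_num) (by positivity)

lemma lvl_rpow {p : ℝ} (hp1 : 1 ≤ p) (k : ℕ) : lvl p k ^ p = 2 ^ k := by
  unfold lvl
  rw [← Real.rpow_mul (by norm_num), div_mul_cancel₀ _ (by linarith), Real.rpow_natCast]

lemma two_pow_mul_lvl {p : ℝ} (hp1 : 1 ≤ p) (k : ℕ) : 2 ^ k * lvl p k ^ (1 - p) = lvl p k := by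
  rw [← lvl_rpow hp1 k, ← Real.rpow_add (lvl_pos p k)]
  simp

lemma lvl_mono {p : ℝ} (hp1 : 1 ≤ p) {k l : ℕ} (h : k ≤ l) : lvl p k ≤ lvl p l := by
  unfold lvl
  gcongr
  norm_num

lemma lvl_succ_rpow_le {p : ℝ} (hp1 : 1 ≤ p) (hp2 : p < 2) (k : ℕ) :
    lvl p (k + 1) ^ (2 - p) ≤ 2 * lvl p k ^ (2 - p) := by
  have h : lvl p (k + 1) ≤ 2 * lvl p k := by
    unfold lvl
    push_cast
    rw [add_div, Real.rpow_add (by norm_num), mul_comm]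
    gcongr
    calc (2 : ℝ) ^ (1 / p) ≤ 2 ^ (1 : ℝ) := by
          apply Real.rpow_le_rpow_of_exponent_le (by norm_num)
          rw [div_le_one (by linarith)]; exact hp1
      _ = 2 := by norm_num
  calc lvl p (k + 1) ^ (2 - p) ≤ (2 * lvl p k) ^ (2 - p) := by
        have := lvl_pos p (k + 1)
        gcongr
    _ = 2 ^ (2 - p) * lvl p k ^ (2 - p) := Real.mul_rpow (by norm_num) (lvl_pos _ _).le
    _ ≤ 2 ^ (1 : ℝ) * lvl p k ^ (2 - p) := by
        have := lvl_pos p k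
        have : (2 : ℝ) ^ (2 - p) ≤ 2 ^ (1 : ℝ) :=
          Real.rpow_le_rpow_of_exponent_le (by norm_num) (by linarith)
        gcongr
    _ = _ := by norm_num

/-- The geometric ratio `2 ^ (-(2 - p) / (2 p))` by which successive dyadic scales contribute less
and less to the maximal inequality. -/
def rat (p : ℝ) : ℝ := (2 : ℝ) ^ (-((2 - p) / (2 * p)))

lemma rat_pos (p : ℝ) : 0 < rat p := by unfold rat; positivity

lemma rat_lt_one {p : ℝ} (hp1 : 1 ≤ p) (hp2 : p < 2) : rat p < 1 := by
  unfold rat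
  apply Real.rpow_lt_one_of_one_lt_of_neg (by norm_num)
  have : 0 < (2 - p) / (2 * p) := by apply div_pos <;> linarith
  linarith

/-- The second-moment scale of a `2 ^ (k + d)`-element rectangle truncated at the level of its
`2 ^ k`-element blocks is smaller than that at its own level by the geometric factor
`rat p ^ (2 * d)`. -/
lemma two_pow_mul_lvl_rpow {p : ℝ} (hp1 : 1 ≤ p) (k d : ℕ) :
    2 ^ (k + d) * lvl p k ^ (2 - p) = lvl p (k + d) ^ 2 * (rat p ^ d) ^ 2 := by
  unfold lvl rat
  have hp : p ≠ 0 := by linarith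
  rw [← Real.rpow_natCast, ← Real.rpow_natCast, ← Real.rpow_natCast, ← Real.rpow_natCast,
    ← Real.rpow_mul (by positivity), ← Real.rpow_mul (by positivity), ← Real.rpow_mul (by positivity),
    ← Real.rpow_mul (by positivity), ← Real.rpow_add (by norm_num), ← Real.rpow_add (by norm_num)]
  congr 1
  push_cast
  field_simp
  ring

lemma lvl_sq_le {p : ℝ} (hp1 : 1 ≤ p) (k d : ℕ) :
    lvl p k ^ 2 ≤ lvl p (k + d) ^ 2 * (rat p ^ d) ^ 2 := by
  rw [← two_pow_mul_lvl_rpow hp1]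
  have : lvl p k ^ 2 = 2 ^ k * lvl p k ^ (2 - p) := by
    rw [← lvl_rpow hp1 k, ← Real.rpow_add (lvl_pos p k)]
    rw [show p + (2 - p) = ((2 : ℕ) : ℝ) by push_cast; ring, Real.rpow_natCast]
  rw [this]
  have := lvl_pos p k
  gcongr
  · norm_num
  · omega

lemma sum_rat_le {p : ℝ} (hp1 : 1 ≤ p) (hp2 : p < 2) (M N : ℕ) :
    ∑ x ∈ range (M + 1) ×ˢ range (N + 1), rat p ^ ((M - x.1) + (N - x.2))
      ≤ (1 / (1 - rat p)) ^ 2 := by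
  have h : ∀ M, ∑ s ∈ range (M + 1), rat p ^ (M - s) ≤ 1 / (1 - rat p) := by
    intro M
    have := Finset.sum_range_reflect (fun s => rat p ^ s) (M + 1)
    simp only [Nat.add_sub_cancel] at this
    have e : ∀ s, M + 1 - 1 - s = M - s := fun s => by omega
    rw [this, one_div, ← tsum_geometric_of_lt_one (rat_pos p).le (rat_lt_one hp1 hp2)]
    exact (summable_geometric_of_lt_one (rat_pos p).le (rat_lt_one hp1 hp2)).sum_le_tsum _
      fun i _ => pow_nonneg (rat_pos p).le i
  rw [Finset.sum_product]
  simp only [pow_add, ← Finset.mul_sum, ← Finset.sum_mul]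
  rw [sq]
  have := rat_pos p
  have := rat_lt_one hp1 hp2
  refine mul_le_mul (h M) (h N) (Finset.sum_nonneg fun i _ => by positivity) ?_
  exact one_div_nonneg.2 (by linarith)

/-! ### Arrays with a variance inequality over rectangles -/

/-- The array `W` satisfies the variance inequality over rectangles with constant `K`: for a
single monotone function `f`, bounded on the range of `W`, the sum of the centred variables
`f (W i j)` over any rectangle of size `u × w` has second moment at most `K u w max E f(W)²`. -/
def RectVar {Ω : Type*} [MeasureSpace Ω] (K : ℝ) (W : ℕ → ℕ → Ω → ℝ) : Prop :=
  ∀ (f : ℝ → ℝ) (c B : ℝ), Monotone f → (∀ i j ω, |f (W i j ω)| ≤ c) →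
    (∀ i j, ∫ ω, f (W i j ω) ^ 2 ≤ B) → ∀ a b u w : ℕ,
    ∫ ω, (∑ i ∈ range u, ∑ j ∈ range w,
      (f (W (a + i) (b + j) ω) - ∫ ω', f (W (a + i) (b + j) ω'))) ^ 2 ≤ K * (u * w) * B

/-- Nonnegative measurable arrays with `p`-th moments at most `1` satisfying `RectVar K`. -/
structure Adm {Ω : Type*} [MeasureSpace Ω] (p K : ℝ) (W : ℕ → ℕ → Ω → ℝ) : Prop where
  meas : ∀ i j, Measurable (W i j)
  nonneg : ∀ i j ω, 0 ≤ W i j ω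
  int : ∀ i j, Integrable fun ω => W i j ω ^ p
  le_one : ∀ i j, ∫ ω, W i j ω ^ p ≤ 1
  var : RectVar K W

/-- The centred sum of `f (W i j)` over the rectangle `[a, a + u) × [b, b + w)`. -/
def blk {Ω : Type*} [MeasureSpace Ω] (f : ℝ → ℝ) (W : ℕ → ℕ → Ω → ℝ) (a b u w : ℕ) (ω : Ω) : ℝ :=
  ∑ i ∈ range u, ∑ j ∈ range w,
      (f (W (a + i) (b + j) ω) - ∫ ω', f (W (a + i) (b + j) ω'))

section
variable {Ω : Type*} [MeasureSpace Ω]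

/-- The sum of the squared centred block sums over all dyadic `2 ^ s × 2 ^ t` blocks of
`[0, 2 ^ M) × [0, 2 ^ N)`; it dominates the square of each of them. -/
def sqSum (f : ℝ → ℝ) (W : ℕ → ℕ → Ω → ℝ) (M N s t : ℕ) (ω : Ω) : ℝ :=
  ∑ q ∈ range (2 ^ (M - s)) ×ˢ range (2 ^ (N - t)),
    blk f W (q.1 * 2 ^ s) (q.2 * 2 ^ t) (2 ^ s) (2 ^ t) ω ^ 2

lemma sqSum_nonneg (f : ℝ → ℝ) (W : ℕ → ℕ → Ω → ℝ) (M N s t : ℕ) (ω : Ω) :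
    0 ≤ sqSum f W M N s t ω := Finset.sum_nonneg fun _ _ => sq_nonneg _

lemma abs_blk_le (f : ℝ → ℝ) (W : ℕ → ℕ → Ω → ℝ) (M N s t : ℕ) (ω : Ω) {a b : ℕ}
    (ha : a < 2 ^ (M - s)) (hb : b < 2 ^ (N - t)) :
    |blk f W (a * 2 ^ s) (b * 2 ^ t) (2 ^ s) (2 ^ t) ω| ≤ √(sqSum f W M N s t ω) := by
  apply Real.abs_le_sqrt
  exact Finset.single_le_sum
    (f := fun q : ℕ × ℕ => blk f W (q.1 * 2 ^ s) (q.2 * 2 ^ t) (2 ^ s) (2 ^ t) ω ^ 2)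
    (fun _ _ => sq_nonneg _) (a := (a, b)) (by simp [ha, hb])

/-- Since the `p`-th moments are at most `1`, a pointwise bound of `g` by `c * w ^ p` turns into a
bound of `∫ g (W i j)` by `c`. -/
lemma integral_le_of_pointwise {p K : ℝ} {W : ℕ → ℕ → Ω → ℝ} (h : Adm p K W) {g : ℝ → ℝ} {c : ℝ}
    (hc : 0 ≤ c) (hg : ∀ w, 0 ≤ w → 0 ≤ g w) (hgc : ∀ w, 0 ≤ w → g w ≤ c * w ^ p) (i j : ℕ) :
    ∫ ω, g (W i j ω) ≤ c := by
  calc ∫ ω, g (W i j ω) ≤ ∫ ω, c * W i j ω ^ p :=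
        integral_mono_of_nonneg (Eventually.of_forall fun ω => hg _ (h.nonneg i j ω))
          ((h.int i j).const_mul c) (Eventually.of_forall fun ω => hgc _ (h.nonneg i j ω))
    _ ≤ c := by
        rw [integral_const_mul]
        exact mul_le_of_le_one_right hc (h.le_one i j)

end

section
variable {Ω : Type*} [MeasureSpace Ω] [IsProbabilityMeasure (volume : Measure Ω)]

lemma memLp_comp {W : ℕ → ℕ → Ω → ℝ} (hm : ∀ i j, Measurable (W i j)) {f : ℝ → ℝ} {c : ℝ}
    (hf : Monotone f) (hc : ∀ i j ω, |f (W i j ω)| ≤ c) (q : ℝ≥0∞) (i j : ℕ) :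
    MemLp (fun ω => f (W i j ω)) q :=
  MemLp.of_bound (hf.measurable.comp (hm i j)).aestronglyMeasurable c
    (Eventually.of_forall fun ω => hc i j ω)

lemma memLp_blk {W : ℕ → ℕ → Ω → ℝ} (hm : ∀ i j, Measurable (W i j)) {f : ℝ → ℝ} {c : ℝ}
    (hf : Monotone f) (hc : ∀ i j ω, |f (W i j ω)| ≤ c) (q : ℝ≥0∞) (a b u w : ℕ) :
    MemLp (blk f W a b u w) q :=
  memLp_finsetSum _ fun _ _ => memLp_finsetSum _ fun _ _ =>
    (memLp_comp hm hf hc q _ _).sub (memLp_const _)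

lemma integrable_sqSum {W : ℕ → ℕ → Ω → ℝ} (hm : ∀ i j, Measurable (W i j)) {f : ℝ → ℝ} {c : ℝ}
    (hf : Monotone f) (hc : ∀ i j ω, |f (W i j ω)| ≤ c) (M N s t : ℕ) :
    Integrable (sqSum f W M N s t) :=
  integrable_finsetSum _ fun _ _ => (memLp_blk hm hf hc 2 _ _ _ _).integrable_sq

/-- There are `2 ^ (M - s) * 2 ^ (N - t)` blocks of `2 ^ s * 2 ^ t` elements each, so the bound does
not depend on the block size: only the truncation level matters. -/
lemma integral_sqSum_le {K : ℝ} {W : ℕ → ℕ → Ω → ℝ} (hm : ∀ i j, Measurable (W i j))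
    (hK : RectVar K W) {f : ℝ → ℝ} {c B : ℝ}
    (hf : Monotone f) (hc : ∀ i j ω, |f (W i j ω)| ≤ c) (hB : ∀ i j, ∫ ω, f (W i j ω) ^ 2 ≤ B)
    {M N s t : ℕ} (hs : s ≤ M) (ht : t ≤ N) :
    ∫ ω, sqSum f W M N s t ω ≤ K * 2 ^ (M + N) * B := by
  unfold sqSum
  rw [integral_finsetSum _ fun _ _ => (memLp_blk hm hf hc 2 _ _ _ _).integrable_sq]
  calc _ ≤ ∑ q ∈ range (2 ^ (M - s)) ×ˢ range (2 ^ (N - t)),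
        K * ((2 ^ s : ℕ) * (2 ^ t : ℕ)) * B :=
        Finset.sum_le_sum fun q _ => hK f c B hf hc hB _ _ _ _
    _ = _ := by
        rw [Finset.sum_const, Finset.card_product, card_range, card_range, nsmul_eq_mul]
        push_cast
        have e1 : (2 : ℝ) ^ M = 2 ^ (M - s) * 2 ^ s := by rw [← pow_add, Nat.sub_add_cancel hs]
        have e2 : (2 : ℝ) ^ N = 2 ^ (N - t) * 2 ^ t := by rw [← pow_add, Nat.sub_add_cancel ht]
        rw [pow_add, e1, e2]; ring

end

/-! ### The maximal inequality for truncated sums -/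

lemma monotone_min_const (c : ℝ) : Monotone fun x : ℝ => min x c :=
  fun _ _ h => min_le_min_right c h

lemma monotone_min_sub {c d : ℝ} (h : c ≤ d) : Monotone fun x : ℝ => min x d - min x c := by
  intro x y hxy
  simp only
  rcases le_total x c with h1 | h1 <;> rcases le_total x d with h2 | h2 <;>
  rcases le_total y c with h3 | h3 <;> rcases le_total y d with h4 | h4 <;>
  simp only [min_eq_left, min_eq_right, *] <;> linarith

/-- The maximal inequality in `L ^ 2` for sums truncated at the level of the whole rectangle. The
maximum is bounded pointwise by a single random variable `R`, obtained from `chain_bound_two` by a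
Cauchy–Schwarz inequality with the geometric weights `rat p ^ ((M - s) + (N - t))`; these weights
are what removes the logarithmic factors of the Rademacher–Menshov method. -/
lemma max_trunc_sq {Ω : Type*} [MeasureSpace Ω] [IsProbabilityMeasure (volume : Measure Ω)]
    {p K : ℝ} (hp1 : 1 ≤ p) (hp2 : p < 2) (hK : 0 ≤ K) :
    ∃ C : ℝ, 0 ≤ C ∧ ∀ W : ℕ → ℕ → Ω → ℝ, Adm p K W → ∀ M N : ℕ, ∃ R : Ω → ℝ,
      (∀ ω, 0 ≤ R ω) ∧ Measurable R ∧ Integrable (fun ω => R ω ^ 2) ∧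
      ∫ ω, R ω ^ 2 ≤ C * lvl p (M + N) ^ 2 ∧
      ∀ ω, ∀ u ≤ 2 ^ M, ∀ v ≤ 2 ^ N, |blk (fun x => min x (lvl p (M + N))) W 0 0 u v ω| ≤ R ω := by
  set L := (1 / (1 - rat p)) ^ 2 with hL
  have hL0 : 0 ≤ L := sq_nonneg _
  set C1 := 3 * (K + 16 * (K * 2) + 16) with hC1
  have hC10 : 0 ≤ C1 := by positivity
  refine ⟨L * (L * C1), by positivity, fun W hW M N => ?_⟩
  have hr := rat_pos p
  -- truncation at level `k`, and the increment from level `k` to level `k + 1`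
  set f : ℕ → ℝ → ℝ := fun k x => min x (lvl p k) with hf
  set g : ℕ → ℝ → ℝ := fun k x => min x (lvl p (k + 1)) - min x (lvl p k) with hg
  have hl := lvl_pos p
  have hstep : ∀ k, lvl p k ≤ lvl p (k + 1) := fun k => lvl_mono hp1 (Nat.le_succ k)
  have fmono : ∀ k, Monotone (f k) := fun k => monotone_min_const _
  have gmono : ∀ k, Monotone (g k) := fun k => monotone_min_sub (hstep k)
  have f0 : ∀ k w, 0 ≤ w → 0 ≤ f k w := fun k w hw => le_min hw (hl k).le
  have g0 : ∀ k w, 0 ≤ g k w := fun k w => sub_nonneg.2 (min_le_min_left _ (hstep k))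
  have gle : ∀ k w, 0 ≤ w → g k w ≤ f (k + 1) w := fun k w hw => sub_le_self _ (f0 k w hw)
  have fbd : ∀ k i j ω, |f k (W i j ω)| ≤ lvl p k := fun k i j ω => by
    rw [abs_of_nonneg (f0 k _ (hW.nonneg i j ω))]; exact min_le_right _ _
  have gbd : ∀ k i j ω, |g k (W i j ω)| ≤ lvl p (k + 1) := fun k i j ω => by
    rw [abs_of_nonneg (g0 k _)]
    exact (gle k _ (hW.nonneg i j ω)).trans (min_le_right _ _)
  have fsq : ∀ k i j, ∫ ω, f k (W i j ω) ^ 2 ≤ lvl p k ^ (2 - p) := fun k i j =>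
    integral_le_of_pointwise hW (g := fun w => f k w ^ 2) (by have := hl k; positivity)
      (fun w _ => sq_nonneg _)
      (fun w hw => min_sq_le hp2 hp1 hw (hl k)) i j
  have gsq : ∀ k i j, ∫ ω, g k (W i j ω) ^ 2 ≤ 2 * lvl p k ^ (2 - p) := fun k i j =>
    integral_le_of_pointwise hW (g := fun w => g k w ^ 2) (by have := hl k; positivity)
      (fun w _ => sq_nonneg _)
      (fun w hw => by
        calc g k w ^ 2 ≤ f (k + 1) w ^ 2 := by
              have := g0 k w
              have := gle k w hw
              gcongr
          _ ≤ lvl p (k + 1) ^ (2 - p) * w ^ p := min_sq_le hp2 hp1 hw (hl _)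
          _ ≤ _ := by
              have := lvl_succ_rpow_le hp1 hp2 k
              gcongr) i j
  have gmean : ∀ k i j, ∫ ω, g k (W i j ω) ≤ lvl p k ^ (1 - p) := fun k i j =>
    integral_le_of_pointwise hW (by have := hl k; positivity) (fun w _ => g0 k w)
      (fun w hw => le_trans (sub_le_sub_right (min_le_left _ _) _)
        (excess_le hp1 hw (hl k))) i j
  -- weights for the Cauchy–Schwarz inequality, with a sum bounded uniformly in `M` and `N`
  set wt : ℕ × ℕ → ℝ := fun x => rat p ^ ((M - x.1) + (N - x.2)) with hwt
  have wpos : ∀ x, 0 < wt x := fun x => pow_pos hr _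
  set P := range (M + 1) ×ˢ range (N + 1) with hP
  have memP : ∀ x ∈ P, x.1 ≤ M ∧ x.2 ≤ N := fun x hx => by
    simp only [hP, mem_product, mem_range] at hx; omega
  -- dominates the square of the contribution of scale `x` to the chaining bound
  set q2 : ℕ × ℕ → Ω → ℝ := fun x ω => 3 * (sqSum (f (x.1 + x.2)) W M N x.1 x.2 ω
    + 16 * sqSum (g (x.1 + x.2)) W M N x.1 x.2 ω + 16 * lvl p (x.1 + x.2) ^ 2) with hq2
  have q2nn : ∀ x ω, 0 ≤ q2 x ω := fun x ω => by
    have h1 := sqSum_nonneg (f (x.1 + x.2)) W M N x.1 x.2 ω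
    have h2 := sqSum_nonneg (g (x.1 + x.2)) W M N x.1 x.2 ω
    simp only [hq2]; positivity
  have If : ∀ k s t, Integrable (sqSum (f k) W M N s t) := fun k s t =>
    integrable_sqSum hW.meas (fmono k) (fbd k) M N s t
  have Ig : ∀ k s t, Integrable (sqSum (g k) W M N s t) := fun k s t =>
    integrable_sqSum hW.meas (gmono k) (gbd k) M N s t
  have q2int : ∀ x, Integrable (q2 x) := fun x =>
    (((If _ _ _).add ((Ig _ _ _).const_mul 16)).add (integrable_const _)).const_mul 3
  have q2le : ∀ x ∈ P, ∫ ω, q2 x ω ≤ C1 * lvl p (M + N) ^ 2 * wt x ^ 2 := by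
    intro x hx
    obtain ⟨h1, h2⟩ := memP x hx
    have hd : M + N = (x.1 + x.2) + ((M - x.1) + (N - x.2)) := by omega
    have e1 := integral_sqSum_le hW.meas hW.var (fmono (x.1 + x.2)) (fbd _) (fsq _) h1 h2
    have e2 := integral_sqSum_le hW.meas hW.var (gmono (x.1 + x.2)) (gbd _) (gsq _) h1 h2
    have e3 := two_pow_mul_lvl_rpow hp1 (x.1 + x.2) ((M - x.1) + (N - x.2))
    have e4 := lvl_sq_le hp1 (x.1 + x.2) ((M - x.1) + (N - x.2))
    rw [← hd] at e3 e4
    have : ∫ ω, q2 x ω = 3 * ((∫ ω, sqSum (f (x.1 + x.2)) W M N x.1 x.2 ω)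
        + 16 * (∫ ω, sqSum (g (x.1 + x.2)) W M N x.1 x.2 ω) + 16 * lvl p (x.1 + x.2) ^ 2) := by
      simp only [hq2]
      rw [integral_const_mul, integral_add (by exact (If _ _ _).add ((Ig _ _ _).const_mul 16))
        (integrable_const _), integral_add (If _ _ _) ((Ig _ _ _).const_mul 16),
        integral_const_mul]
      simp
    rw [this, hC1]
    have e5 : K * 2 ^ (M + N) * lvl p (x.1 + x.2) ^ (2 - p)
        = K * (lvl p (M + N) ^ 2 * wt x ^ 2) := by rw [mul_assoc, e3]
    have e6 : K * 2 ^ (M + N) * (2 * lvl p (x.1 + x.2) ^ (2 - p))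
        = K * 2 * (lvl p (M + N) ^ 2 * wt x ^ 2) := by
      rw [← e3]; ring
    rw [e5] at e1
    rw [e6] at e2
    change _ ≤ lvl p (M + N) ^ 2 * wt x ^ 2 at e4
    nlinarith
  set G : Ω → ℝ := fun ω => (∑ x ∈ P, wt x) * ∑ x ∈ P, q2 x ω / wt x with hG
  have Gnn : ∀ ω, 0 ≤ G ω := fun ω => mul_nonneg (Finset.sum_nonneg fun x _ => (wpos x).le)
    (Finset.sum_nonneg fun x _ => div_nonneg (q2nn x ω) (wpos x).le)
  have sumw : ∑ x ∈ P, wt x ≤ L := sum_rat_le hp1 hp2 M N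
  have Gint : Integrable G :=
    (integrable_finsetSum _ fun x _ => (q2int x).div_const _).const_mul _
  have sqmeas : ∀ (h : ℝ → ℝ), Monotone h → ∀ s t, Measurable (sqSum h W M N s t) := by
    intro h hh s t
    unfold sqSum blk
    have h1 : ∀ i j, Measurable fun ω => h (W i j ω) := fun i j => hh.measurable.comp (hW.meas i j)
    exact Finset.measurable_fun_sum _ fun q _ => (Finset.measurable_fun_sum _ fun i _ =>
      Finset.measurable_fun_sum _ fun j _ => (h1 _ _).sub_const _).pow_const 2
  have Gmeas : Measurable G := by
    have h1 : ∀ x, Measurable (q2 x) := fun x => by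
      have := sqmeas _ (fmono (x.1 + x.2)) x.1 x.2
      have := sqmeas _ (gmono (x.1 + x.2)) x.1 x.2
      simp only [hq2]
      fun_prop
    simp only [hG]
    fun_prop
  refine ⟨fun ω => √(G ω), fun ω => Real.sqrt_nonneg _, Gmeas.sqrt, ?_, ?_, ?_⟩
  · simpa only [Real.sq_sqrt (Gnn _)] using Gint
  · simp only [Real.sq_sqrt (Gnn _)]
    simp only [hG]
    rw [integral_const_mul, integral_finsetSum _ fun x _ => (q2int x).div_const _]
    have : ∑ x ∈ P, ∫ ω, q2 x ω / wt x ≤ L * (C1 * lvl p (M + N) ^ 2) := by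
      calc ∑ x ∈ P, ∫ ω, q2 x ω / wt x ≤ ∑ x ∈ P, wt x * (C1 * lvl p (M + N) ^ 2) := by
            refine Finset.sum_le_sum fun x hx => ?_
            rw [integral_div, div_le_iff₀ (wpos x)]
            exact (q2le x hx).trans (le_of_eq (by ring))
        _ ≤ _ := by
            rw [← Finset.sum_mul]
            gcongr
    calc _ ≤ L * (L * (C1 * lvl p (M + N) ^ 2)) := by
          refine mul_le_mul sumw this (Finset.sum_nonneg fun x _ => integral_nonneg fun ω =>
            div_nonneg (q2nn x ω) (wpos x).le) hL0
      _ = _ := by ring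
  · intro ω u hu v hv
    set α : ℕ → ℕ → ℝ := fun s t => √(sqSum (f (s + t)) W M N s t ω) with hα
    set β : ℕ → ℕ → ℝ := fun s t => √(sqSum (g (s + t)) W M N s t ω) + lvl p (s + t) with hβ
    have main := chain_bound_two (fun k i j => f k (W i j ω) - ∫ ω', f k (W i j ω')) α β M N
      (fun s t => Real.sqrt_nonneg _)
      (fun s t => add_nonneg (Real.sqrt_nonneg _) (hl _).le) ?_ ?_ u hu v hv
    · have e : blk (f (M + N)) W 0 0 u v ω = ∑ i ∈ range u, ∑ j ∈ range v,
          (f (M + N) (W i j ω) - ∫ ω', f (M + N) (W i j ω')) := by simp [blk]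
      rw [e]
      refine main.trans (Real.le_sqrt_of_sq_le ?_)
      rw [← Finset.sum_product (s := range (M + 1)) (t := range (N + 1))
        (f := fun x => α x.1 x.2 + 4 * β x.1 x.2)]
      refine Finset.sum_sq_le_sum_mul_sum_of_sq_le_mul _ (fun x _ => (wpos x).le)
        (fun x _ => div_nonneg (q2nn x ω) (wpos x).le) fun x _ => ?_
      rw [mul_div_cancel₀ _ (wpos x).ne']
      have h1 := Real.sq_sqrt (sqSum_nonneg (f (x.1 + x.2)) W M N x.1 x.2 ω)
      have h2 := Real.sq_sqrt (sqSum_nonneg (g (x.1 + x.2)) W M N x.1 x.2 ω)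
      simp only [hq2, hα, hβ]
      rw [← h1, ← h2]
      set A := √(sqSum (f (x.1 + x.2)) W M N x.1 x.2 ω)
      set B := √(sqSum (g (x.1 + x.2)) W M N x.1 x.2 ω)
      rw [Real.sqrt_sq (Real.sqrt_nonneg _), Real.sqrt_sq (Real.sqrt_nonneg _)]
      nlinarith [sq_nonneg (A - 4 * B), sq_nonneg (A - 4 * lvl p (x.1 + x.2)),
        sq_nonneg (B - lvl p (x.1 + x.2))]
    · intro s hs t ht a ha b hb
      exact abs_blk_le (f (s + t)) W M N s t ω ha hb
    · intro s hs t ht a ha b hb u' hu' w' hw'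
      have Ifk : ∀ k i j, Integrable fun ω => f k (W i j ω) := fun k i j =>
        (memLp_comp hW.meas (fmono k) (fbd k) 1 i j).integrable le_rfl
      have hsub : ∀ i j, (f (s + t + 1) (W i j ω) - ∫ ω', f (s + t + 1) (W i j ω'))
          - (f (s + t) (W i j ω) - ∫ ω', f (s + t) (W i j ω'))
          = g (s + t) (W i j ω) - ∫ ω', g (s + t) (W i j ω') := by
        intro i j
        have : ∫ ω', g (s + t) (W i j ω')
            = (∫ ω', f (s + t + 1) (W i j ω')) - ∫ ω', f (s + t) (W i j ω') :=
          integral_sub (Ifk (s + t + 1) i j) (Ifk (s + t) i j)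
        rw [this]
        simp only [hg, hf]
        ring
      simp only [hsub]
      refine (abs_partial_sum_le (fun i j => g (s + t) (W (a * 2 ^ s + i) (b * 2 ^ t + j) ω))
        (fun i j => ∫ ω', g (s + t) (W (a * 2 ^ s + i) (b * 2 ^ t + j) ω'))
        (fun i j => g0 _ _) (fun i j => integral_nonneg fun ω => g0 _ _) hu' hw').trans ?_
      refine add_le_add (abs_blk_le (g (s + t)) W M N s t ω ha hb) ?_
      calc _ ≤ ∑ i ∈ range (2 ^ s), ∑ j ∈ range (2 ^ t), lvl p (s + t) ^ (1 - p) :=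
            Finset.sum_le_sum fun i _ => Finset.sum_le_sum fun j _ => gmean _ _ _
        _ = lvl p (s + t) := by
            simp only [sum_const, card_range, nsmul_eq_mul]
            push_cast
            rw [← mul_assoc, ← pow_add, two_pow_mul_lvl hp1 (s + t)]

/-! ### The excess over the truncation level -/

lemma min_sum_le {ι : Type*} (s : Finset ι) (y : ι → ℝ) (hy : ∀ i ∈ s, 0 ≤ y i) {x : ℝ}
    (hx : 0 ≤ x) : min (∑ i ∈ s, y i) x ≤ ∑ i ∈ s, min (y i) x := by
  by_cases h : ∀ i ∈ s, y i ≤ x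
  · rw [Finset.sum_congr rfl fun i hi => min_eq_left (h i hi)]
    exact min_le_left _ _
  · push Not at h
    obtain ⟨i, hi, hlt⟩ := h
    calc _ ≤ x := min_le_right _ _
      _ = min (y i) x := (min_eq_right hlt.le).symm
      _ ≤ _ := Finset.single_le_sum (f := fun i => min (y i) x)
        (fun j hj => le_min (hy j hj) hx) hi

/-- A `p`-th power recovered from truncated squares over dyadic scales: passing from level `x` to
level `2 * x` matters only when `S` exceeds `x`, and then the truncated square at `x` pays for it. -/
lemma min_rpow_le_sum {p S b : ℝ} (hp1 : 1 ≤ p) (hp2 : p < 2) (hS : 0 ≤ S) (hb : 0 < b) (n : ℕ) :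
    min S (b * 2 ^ n) ^ p ≤ b ^ p +
      4 * ∑ j ∈ range n, (b * 2 ^ j) ^ (p - 2) * min S (b * 2 ^ j) ^ 2 := by
  induction n with
  | zero =>
    simp only [pow_zero, mul_one, range_zero, sum_empty, mul_zero, add_zero]
    exact Real.rpow_le_rpow (le_min hS hb.le) (min_le_right _ _) (by linarith)
  | succ n ih =>
    have hx : 0 < b * 2 ^ n := by positivity
    have hx2 : b * 2 ^ (n + 1) = 2 * (b * 2 ^ n) := by ring
    rw [Finset.sum_range_succ, hx2]
    set x := b * 2 ^ n
    have ht : 0 ≤ x ^ (p - 2) * min S x ^ 2 := by positivity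
    rcases le_total S x with h | h
    · rw [min_eq_left (h.trans (by linarith : x ≤ 2 * x))]
      rw [min_eq_left h] at ih ⊢
      rw [min_eq_left h] at ht
      linarith
    · have h1 : min S (2 * x) ^ p ≤ 4 * x ^ p := by
        calc min S (2 * x) ^ p ≤ (2 * x) ^ p :=
              Real.rpow_le_rpow (le_min hS (by linarith)) (min_le_right _ _) (by linarith)
          _ = 2 ^ p * x ^ p := Real.mul_rpow (by norm_num) hx.le
          _ ≤ 2 ^ (2 : ℝ) * x ^ p := by gcongr; norm_num
          _ = _ := by norm_num
      have h2 : x ^ (p - 2) * min S x ^ 2 = x ^ p := by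
        rw [min_eq_right h, ← Real.rpow_natCast, ← Real.rpow_add hx]
        norm_num
      have h3 : 0 ≤ ∑ j ∈ range n, (b * 2 ^ j) ^ (p - 2) * min S (b * 2 ^ j) ^ 2 :=
        Finset.sum_nonneg fun j _ => by positivity
      have h4 : 0 ≤ b ^ p := by positivity
      rw [h2]
      linarith

/-- Summed over the scales, the contributions of the bounds on the truncated second moments cost no
more than a multiple of the total tail mass. -/
lemma sum_scale_le {p b : ℝ} (hp2 : p < 2) (hb : 0 < b) {γ H : ℕ → ℝ}
    (hγ : ∀ l, 0 ≤ γ l) (hsum : ∀ n, ∑ l ∈ range n, γ l ≤ 1)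
    (hH0 : H 0 = b ^ (2 - p) * γ 0)
    (hH : ∀ j, H (j + 1) = H j + 4 * ((b * 2 ^ j) ^ (2 - p) * γ j)) (n : ℕ) :
    ∑ j ∈ range n, (b * 2 ^ j) ^ (p - 2) * H j ≤ 5 / (1 - 2 ^ (p - 2)) := by
  set r : ℝ := 2 ^ (p - 2) with hr
  have hr1 : r < 1 := Real.rpow_lt_one_of_one_lt_of_neg (by norm_num) (by linarith)
  have hr0 : 0 < r := by positivity
  set e : ℕ → ℝ := fun j => (b * 2 ^ j) ^ (p - 2) * H j with he
  have hHn : ∀ j, 0 ≤ H j := by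
    intro j
    induction j with
    | zero => rw [hH0]; have := hγ 0; positivity
    | succ j ih => rw [hH]; have := hγ j; positivity
  have en : ∀ j, 0 ≤ e j := fun j => by have := hHn j; positivity
  have cancel : ∀ x : ℝ, 0 < x → ∀ g : ℝ, x ^ (p - 2) * (x ^ (2 - p) * g) = g := by
    intro x hx g
    rw [← mul_assoc, ← Real.rpow_add hx]; simp
  have e0 : e 0 = γ 0 := by
    simp only [he, hH0, pow_zero, mul_one]
    exact cancel b hb _
  have es : ∀ j, e (j + 1) = r * (e j + 4 * γ j) := by
    intro j
    have hx : 0 < b * 2 ^ j := by positivity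
    have : (b * 2 ^ (j + 1)) ^ (p - 2) = r * (b * 2 ^ j) ^ (p - 2) := by
      rw [hr, ← Real.mul_rpow (by norm_num) hx.le]
      congr 1; ring
    simp only [he, this, hH]
    have := cancel _ hx (γ j)
    linear_combination 4 * r * this
  have hT : ∑ j ∈ range (n + 1), e j = r * (∑ j ∈ range n, e j + 4 * ∑ j ∈ range n, γ j) + γ 0 := by
    rw [Finset.sum_range_succ', e0]
    simp only [es, ← Finset.mul_sum, Finset.sum_add_distrib]
  have hle : ∑ j ∈ range n, e j ≤ ∑ j ∈ range (n + 1), e j := by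
    rw [Finset.sum_range_succ]; linarith [en n]
  have h1 := hsum n
  have h2 : γ 0 ≤ 1 := by simpa using hsum 1
  have h3 : 0 ≤ ∑ j ∈ range n, γ j := Finset.sum_nonneg fun _ _ => hγ _
  rw [le_div_iff₀ (by linarith)]
  nlinarith

lemma monotone_excess (b x : ℝ) : Monotone fun w : ℝ => min (max (w - b) 0) x :=
  fun _ _ h => min_le_min_right _ (max_le_max_right _ (by linarith))

lemma max_sub_eq (w b : ℝ) : max (w - b) 0 = w - min w b := by
  rcases le_total w b with h | h
  · rw [min_eq_left h, max_eq_right (by linarith)]; ring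
  · rw [min_eq_right h, max_eq_left (by linarith)]

section
variable {Ω : Type*} [MeasureSpace Ω] [IsProbabilityMeasure (volume : Measure Ω)]

/-- Truncated second moments of the excess over the level `b`, bounded through the tails by
passing from each scale `b * 2 ^ j` to the next. -/
lemma integral_excess_sq_le {w : Ω → ℝ} (hw : Measurable w) {p b : ℝ} (hb : 0 < b)
    {γ H : ℕ → ℝ}
    (ht : ∀ l, volume.real {ω | b * 2 ^ l < w ω} * (b * 2 ^ l) ^ p ≤ γ l)
    (hH0 : H 0 = b ^ (2 - p) * γ 0)
    (hH : ∀ j, H (j + 1) = H j + 4 * ((b * 2 ^ j) ^ (2 - p) * γ j)) (j : ℕ) :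
    ∫ ω, min (max (w ω - b) 0) (b * 2 ^ j) ^ 2 ≤ H j := by
  have hint : ∀ x : ℝ, 0 ≤ x → Integrable fun ω => min (max (w ω - b) 0) x ^ 2 := by
    intro x hx
    refine (MemLp.of_bound (p := 2) (f := fun ω => min (max (w ω - b) 0) x) ?_ x
      (Eventually.of_forall fun ω => ?_)).integrable_sq
    · exact ((monotone_excess b x).measurable.comp hw).aestronglyMeasurable
    · rw [Real.norm_eq_abs, abs_of_nonneg (le_min (le_max_right _ _) hx)]
      exact min_le_right _ _
  have key : ∀ l, (b * 2 ^ l) ^ 2 * volume.real {ω | b * 2 ^ l < w ω}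
      ≤ (b * 2 ^ l) ^ (2 - p) * γ l := by
    intro l
    have hx : 0 < b * 2 ^ l := by positivity
    have : (b * 2 ^ l) ^ 2 = (b * 2 ^ l) ^ (2 - p) * (b * 2 ^ l) ^ p := by
      rw [← Real.rpow_add hx, sub_add_cancel]; norm_cast
    rw [this, mul_assoc, mul_comm ((b * 2 ^ l) ^ p)]
    exact mul_le_mul_of_nonneg_left (ht l) (by positivity)
  have hms : ∀ x : ℝ, MeasurableSet {ω | x < w ω} := fun x => measurableSet_lt measurable_const hw
  have hind : ∀ x c : ℝ, Integrable ({ω | x < w ω}.indicator fun _ => c) := fun x c =>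
    (integrable_const c).indicator (hms x)
  have iind : ∀ x c : ℝ, ∫ ω, {ω | x < w ω}.indicator (fun _ => c) ω
      = c * volume.real {ω | x < w ω} := fun x c => by
    rw [integral_indicator_const _ (hms x), smul_eq_mul, mul_comm]
  induction j with
  | zero =>
    calc ∫ ω, min (max (w ω - b) 0) (b * 2 ^ 0) ^ 2
        ≤ ∫ ω, {ω | b * 2 ^ 0 < w ω}.indicator (fun _ => (b * 2 ^ 0) ^ 2) ω := by
          refine integral_mono (hint _ (by positivity)) (hind _ _) fun ω => ?_
          simp only [Set.indicator, Set.mem_ofPred_eq, pow_zero, mul_one]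
          split_ifs with h
          · have h0 : 0 ≤ min (max (w ω - b) 0) b := le_min (le_max_right _ _) hb.le
            have := min_le_right (max (w ω - b) 0) b
            gcongr
          · rw [max_eq_right (by linarith), min_eq_left hb.le]; simp
      _ ≤ _ := by
          rw [iind, hH0]
          simpa using key 0
  | succ j ih =>
    set x := b * 2 ^ j with hx
    have hx0 : 0 < x := by positivity
    have hx2 : b * 2 ^ (j + 1) = 2 * x := by rw [hx]; ring
    rw [hx2, hH]
    calc ∫ ω, min (max (w ω - b) 0) (2 * x) ^ 2
        ≤ ∫ ω, (min (max (w ω - b) 0) x ^ 2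
            + {ω | x < w ω}.indicator (fun _ => 4 * x ^ 2) ω) := by
          refine integral_mono (hint _ (by positivity))
            ((hint _ hx0.le).add (hind _ _)) fun ω => ?_
          simp only [Set.indicator, Set.mem_ofPred_eq]
          have h0 : 0 ≤ max (w ω - b) 0 := le_max_right _ _
          split_ifs with h
          · have h1 : min (max (w ω - b) 0) (2 * x) ^ 2 ≤ (2 * x) ^ 2 := by
              have := min_le_right (max (w ω - b) 0) (2 * x)
              have : 0 ≤ min (max (w ω - b) 0) (2 * x) := le_min h0 (by linarith)
              gcongr
            nlinarith [sq_nonneg (min (max (w ω - b) 0) x)]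
          · have h1 : max (w ω - b) 0 ≤ x := max_le (by linarith) hx0.le
            rw [min_eq_left h1, min_eq_left (by linarith)]; simp
      _ ≤ _ := by
          rw [integral_add (hint _ hx0.le) (hind _ _), iind]
          have := key j
          linarith

/-- The sum of the excesses of an admissible array over the level `2 ^ ((M + N) / p)` has `p`-th
moment of the order of the number of summands, as soon as the tails are summable over the dyadic
multiples of that level. -/
lemma excess_rpow {p K : ℝ} (hp1 : 1 ≤ p) (hp2 : p < 2) (hK : 0 ≤ K) :
    ∃ C : ℝ, 0 ≤ C ∧ ∀ W : ℕ → ℕ → Ω → ℝ, Adm p K W → ∀ (M N : ℕ) (γ : ℕ → ℝ),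
      (∀ l, 0 ≤ γ l) → (∀ n, ∑ l ∈ range n, γ l ≤ 1) →
      (∀ i j l, volume.real {ω | lvl p (M + N) * 2 ^ l < W i j ω} * (lvl p (M + N) * 2 ^ l) ^ p
        ≤ γ l) →
      (Integrable fun ω => (∑ x ∈ range (2 ^ M) ×ˢ range (2 ^ N),
        max (W x.1 x.2 ω - lvl p (M + N)) 0) ^ p) ∧
      ∫ ω, (∑ x ∈ range (2 ^ M) ×ˢ range (2 ^ N),
        max (W x.1 x.2 ω - lvl p (M + N)) 0) ^ p ≤ C * 2 ^ (M + N) := by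
  set r : ℝ := 2 ^ (p - 2) with hr
  have hr1 : r < 1 := Real.rpow_lt_one_of_one_lt_of_neg (by norm_num) (by linarith)
  have hr0 : 0 < r := by positivity
  have hr1' : 0 < 1 - r := by linarith
  refine ⟨1 + 8 * K * (5 / (1 - r)) + 8 * (1 / (1 - r)), by positivity,
    fun W hW M N γ hγ hsum ht => ?_⟩
  set b := lvl p (M + N) with hb
  have hb0 : 0 < b := lvl_pos _ _
  have hbp : b ^ p = 2 ^ (M + N) := lvl_rpow hp1 _
  set P := range (2 ^ M) ×ˢ range (2 ^ N) with hP
  set S : Ω → ℝ := fun ω => ∑ x ∈ P, max (W x.1 x.2 ω - b) 0 with hS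
  have hS0 : ∀ ω, 0 ≤ S ω := fun ω => Finset.sum_nonneg fun _ _ => le_max_right _ _
  have hm := hW.meas
  have hSm : Measurable S := by
    refine Finset.measurable_fun_sum _ fun x _ => ?_
    exact ((hm _ _).sub_const _).max measurable_const
  have hp0 : 0 < p := by linarith
  have hSL : MemLp S (ENNReal.ofReal p) := by
    refine memLp_finsetSum _ fun x _ => ?_
    have hWL : MemLp (W x.1 x.2) (ENNReal.ofReal p) := by
      rw [← integrable_norm_rpow_iff (hm _ _).aestronglyMeasurable (by simpa using hp0)
        ENNReal.ofReal_ne_top, ENNReal.toReal_ofReal hp0.le]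
      refine (hW.int x.1 x.2).congr (Eventually.of_forall fun ω => ?_)
      simp [abs_of_nonneg (hW.nonneg x.1 x.2 ω)]
    refine hWL.mono (((hm _ _).sub_const _).max measurable_const).aestronglyMeasurable
      (Eventually.of_forall fun ω => ?_)
    have := hW.nonneg x.1 x.2 ω
    rw [Real.norm_eq_abs, Real.norm_eq_abs, abs_of_nonneg (le_max_right _ _), abs_of_nonneg this]
    exact max_le (by linarith) this
  have hSi : Integrable fun ω => S ω ^ p := by
    have := hSL.integrable_norm_rpow (by simpa using hp0) ENNReal.ofReal_ne_top
    rw [ENNReal.toReal_ofReal hp0.le] at this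
    refine this.congr (Eventually.of_forall fun ω => ?_)
    simp [abs_of_nonneg (hS0 ω)]
  refine ⟨hSi, ?_⟩
  -- bounds for the truncated second moments at the scales `b * 2 ^ j`
  set H : ℕ → ℝ := fun j => b ^ (2 - p) * γ 0
    + ∑ l ∈ range j, 4 * ((b * 2 ^ l) ^ (2 - p) * γ l) with hH
  have hH0 : H 0 = b ^ (2 - p) * γ 0 := by simp [hH]
  have hHs : ∀ j, H (j + 1) = H j + 4 * ((b * 2 ^ j) ^ (2 - p) * γ j) := fun j => by
    simp only [hH, Finset.sum_range_succ]; ring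
  set f : ℕ → ℝ → ℝ := fun j w => min (max (w - b) 0) (b * 2 ^ j) with hf
  have fmono : ∀ j, Monotone (f j) := fun j => monotone_excess _ _
  have f0 : ∀ j w, 0 ≤ f j w := fun j w => le_min (le_max_right _ _) (by positivity)
  have fbd : ∀ j i k ω, |f j (W i k ω)| ≤ b * 2 ^ j := fun j i k ω => by
    rw [abs_of_nonneg (f0 _ _)]; exact min_le_right _ _
  have fsq : ∀ j i k, ∫ ω, f j (W i k ω) ^ 2 ≤ H j := fun j i k =>
    integral_excess_sq_le (hm i k) hb0 (fun l => ht i k l) hH0 hHs j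
  have fmean : ∀ j i k, ∫ ω, f j (W i k ω) ≤ b ^ (1 - p) := fun j i k =>
    integral_le_of_pointwise hW (by positivity) (fun w _ => f0 j w) (fun w hw => by
      refine (min_le_left _ _).trans ?_
      rw [max_sub_eq]
      exact excess_le hp1 hw hb0) i k
  -- truncating the sum costs no more than truncating its terms, whose sum the variance bound controls
  have sumsq : ∀ j, ∫ ω, min (S ω) (b * 2 ^ j) ^ 2 ≤ 2 * (K * 2 ^ (M + N) * H j) + 2 * b ^ 2 := by
    intro j
    have hblk := memLp_blk hm (fmono j) (fbd j) 2 0 0 (2 ^ M) (2 ^ N)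
    have hvar := hW.var (f j) _ _ (fmono j) (fbd j) (fsq j) 0 0 (2 ^ M) (2 ^ N)
    change ∫ ω, blk (f j) W 0 0 (2 ^ M) (2 ^ N) ω ^ 2 ≤ _ at hvar
    set μ := ∑ i ∈ range (2 ^ M), ∑ k ∈ range (2 ^ N), ∫ ω, f j (W i k ω) with hμ
    have hμ0 : 0 ≤ μ := Finset.sum_nonneg fun i _ => Finset.sum_nonneg fun k _ =>
      integral_nonneg fun ω => f0 _ _
    have hμb : μ ≤ b := by
      calc μ ≤ ∑ i ∈ range (2 ^ M), ∑ k ∈ range (2 ^ N), b ^ (1 - p) :=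
            Finset.sum_le_sum fun i _ => Finset.sum_le_sum fun k _ => fmean _ _ _
        _ = b := by
            simp only [sum_const, card_range, nsmul_eq_mul]
            push_cast
            rw [← mul_assoc, ← pow_add, two_pow_mul_lvl hp1 (M + N)]
    calc ∫ ω, min (S ω) (b * 2 ^ j) ^ 2
        ≤ ∫ ω, (2 * blk (f j) W 0 0 (2 ^ M) (2 ^ N) ω ^ 2 + 2 * b ^ 2) := by
          refine integral_mono_of_nonneg (Eventually.of_forall fun ω => sq_nonneg _)
            ((hblk.integrable_sq.const_mul 2).add (integrable_const _))
            (Eventually.of_forall fun ω => ?_)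
          have h1 : min (S ω) (b * 2 ^ j) ≤ blk (f j) W 0 0 (2 ^ M) (2 ^ N) ω + μ := by
            refine (min_sum_le P _ (fun _ _ => le_max_right _ _) (by positivity)).trans ?_
            simp only [blk, zero_add, Finset.sum_sub_distrib, hP, Finset.sum_product, hμ]
            simp only [hf, sub_add_cancel, le_refl]
          have h2 : 0 ≤ min (S ω) (b * 2 ^ j) := le_min (hS0 ω) (by positivity)
          have h3 : min (S ω) (b * 2 ^ j) ≤ |blk (f j) W 0 0 (2 ^ M) (2 ^ N) ω| + b := by
            linarith [le_abs_self (blk (f j) W 0 0 (2 ^ M) (2 ^ N) ω)]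
          simp only
          rw [← sq_abs (blk (f j) W 0 0 (2 ^ M) (2 ^ N) ω)]
          nlinarith [sq_nonneg (|blk (f j) W 0 0 (2 ^ M) (2 ^ N) ω| - b)]
      _ ≤ _ := by
          rw [integral_add (hblk.integrable_sq.const_mul 2) (integrable_const _),
            integral_const_mul]
          push_cast at hvar
          rw [← pow_add] at hvar
          simp only [integral_const, probReal_univ, one_smul]
          linarith
  -- truncating at `b * 2 ^ n` gives bounds uniform in `n`; dominated convergence then removes the
  -- truncation
  have hx0 : ∀ j : ℕ, 0 < b * 2 ^ j := fun j => by positivity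
  have minint : ∀ j, Integrable fun ω => min (S ω) (b * 2 ^ j) ^ 2 := fun j => by
    refine (MemLp.of_bound (p := 2) (f := fun ω => min (S ω) (b * 2 ^ j)) ?_ (b * 2 ^ j)
      (Eventually.of_forall fun ω => ?_)).integrable_sq
    · exact (hSm.min measurable_const).aestronglyMeasurable
    · rw [Real.norm_eq_abs, abs_of_nonneg (le_min (hS0 ω) (hx0 j).le)]
      exact min_le_right _ _
  have bound : ∀ n : ℕ, ∫ ω, min (S ω) (b * 2 ^ n) ^ p
      ≤ (1 + 8 * K * (5 / (1 - r)) + 8 * (1 / (1 - r))) * 2 ^ (M + N) := by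
    intro n
    have hsc := sum_scale_le hp2 hb0 hγ hsum hH0 hHs n
    have hgeo : ∑ j ∈ range n, (b * 2 ^ j) ^ (p - 2) * b ^ 2 ≤ 2 ^ (M + N) * (1 / (1 - r)) := by
      have : ∀ j : ℕ, (b * 2 ^ j) ^ (p - 2) * b ^ 2 = 2 ^ (M + N) * r ^ j := by
        intro j
        rw [Real.mul_rpow hb0.le (by positivity), ← Real.rpow_natCast 2 j,
          ← Real.rpow_mul (by norm_num), mul_comm (j : ℝ), Real.rpow_mul (by norm_num),
          Real.rpow_natCast, mul_right_comm, ← hbp, ← Real.rpow_natCast b 2, ← Real.rpow_add hb0]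
        norm_num [hr]
      simp only [this, ← Finset.mul_sum]
      refine mul_le_mul_of_nonneg_left ?_ (by positivity)
      rw [one_div, ← tsum_geometric_of_lt_one hr0.le hr1]
      exact (summable_geometric_of_lt_one hr0.le hr1).sum_le_tsum _ fun i _ => by positivity
    calc ∫ ω, min (S ω) (b * 2 ^ n) ^ p
        ≤ ∫ ω, (b ^ p + 4 * ∑ j ∈ range n, (b * 2 ^ j) ^ (p - 2) * min (S ω) (b * 2 ^ j) ^ 2) := by
          refine integral_mono_of_nonneg (Eventually.of_forall fun ω =>
            Real.rpow_nonneg (le_min (hS0 ω) (hx0 n).le) _)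
            ((integrable_const _).add ((integrable_finsetSum _ fun j _ =>
              (minint j).const_mul _).const_mul 4))
            (Eventually.of_forall fun ω => min_rpow_le_sum hp1 hp2 (hS0 ω) hb0 n)
      _ = b ^ p + 4 * ∑ j ∈ range n, (b * 2 ^ j) ^ (p - 2) * ∫ ω, min (S ω) (b * 2 ^ j) ^ 2 := by
          rw [integral_add (integrable_const _) ((integrable_finsetSum _ fun j _ =>
              (minint j).const_mul _).const_mul 4), integral_const_mul,
            integral_finsetSum _ fun j _ => (minint j).const_mul _]
          simp [integral_const_mul]
      _ ≤ b ^ p + 4 * ∑ j ∈ range n, (b * 2 ^ j) ^ (p - 2) *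
            (2 * (K * 2 ^ (M + N) * H j) + 2 * b ^ 2) := by
          gcongr with j _
          exact sumsq j
      _ = 2 ^ (M + N) + 8 * K * 2 ^ (M + N) * (∑ j ∈ range n, (b * 2 ^ j) ^ (p - 2) * H j)
            + 8 * ∑ j ∈ range n, (b * 2 ^ j) ^ (p - 2) * b ^ 2 := by
          rw [hbp, Finset.mul_sum, Finset.mul_sum, Finset.mul_sum, add_assoc,
            ← Finset.sum_add_distrib]
          congr 1
          refine Finset.sum_congr rfl fun j _ => by ring
      _ ≤ 2 ^ (M + N) + 8 * K * 2 ^ (M + N) * (5 / (1 - r))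
            + 8 * (2 ^ (M + N) * (1 / (1 - r))) := by gcongr
      _ = _ := by ring
  refine le_of_tendsto' (f := fun n : ℕ => ∫ ω, min (S ω) (b * 2 ^ n) ^ p) (x := atTop) ?_ bound
  refine tendsto_integral_of_dominated_convergence (fun ω => S ω ^ p) (fun n => ?_) hSi
    (fun n => Eventually.of_forall fun ω => ?_) (Eventually.of_forall fun ω => ?_)
  · exact ((hSm.min measurable_const).pow_const p).aestronglyMeasurable
  · have h1 : 0 ≤ min (S ω) (b * 2 ^ n) := le_min (hS0 ω) (hx0 n).le
    rw [Real.norm_eq_abs, abs_of_nonneg (Real.rpow_nonneg h1 _)]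
    exact Real.rpow_le_rpow h1 (min_le_left _ _) hp0.le
  · have : Tendsto (fun n : ℕ => b * (2 : ℝ) ^ n) atTop atTop :=
      (tendsto_pow_atTop_atTop_of_one_lt (by norm_num)).const_mul_atTop hb0
    refine tendsto_const_nhds.congr' ?_
    filter_upwards [this.eventually_ge_atTop (S ω)] with n hn
    rw [min_eq_left hn]

end

/-! ### The maximal inequality of order `p` -/

lemma add_rpow_le {p x y : ℝ} (hp1 : 1 ≤ p) (hp2 : p < 2) (hx : 0 ≤ x) (hy : 0 ≤ y) :
    (x + y) ^ p ≤ 4 * (x ^ p + y ^ p) := by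
  wlog h : x ≤ y generalizing x y
  · rw [add_comm x, add_comm (x ^ p)]
    exact this hy hx (le_of_not_ge h)
  have hx' := Real.rpow_nonneg hx p
  calc (x + y) ^ p ≤ (2 * y) ^ p := Real.rpow_le_rpow (by linarith) (by linarith) (by linarith)
    _ = 2 ^ p * y ^ p := Real.mul_rpow (by norm_num) hy
    _ ≤ 2 ^ (2 : ℝ) * y ^ p := by gcongr; norm_num
    _ = 4 * y ^ p := by norm_num
    _ ≤ _ := by linarith

/-- Lowering a moment from order `q` to order `p` through a level `τ`. -/
lemma rpow_le_add {p q x τ : ℝ} (hp : 0 ≤ p) (hpq : p ≤ q) (hx : 0 ≤ x) (hτ : 0 < τ) :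
    x ^ p ≤ τ ^ p + x ^ q * τ ^ (p - q) := by
  rcases le_total x τ with h | h
  · have := Real.rpow_le_rpow hx h hp
    have : 0 ≤ x ^ q * τ ^ (p - q) := by positivity
    linarith
  · have hx0 : 0 < x := hτ.trans_le h
    have h1 : x ^ p = x ^ q * x ^ (p - q) := by rw [← Real.rpow_add hx0]; ring_nf
    have h2 : x ^ (p - q) ≤ τ ^ (p - q) := Real.rpow_le_rpow_of_nonpos hτ h (by linarith)
    have h3 : x ^ q * x ^ (p - q) ≤ x ^ q * τ ^ (p - q) := by gcongr
    have h4 : 0 ≤ τ ^ p := by positivity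
    linarith

section
variable {Ω : Type*} [MeasureSpace Ω] [IsProbabilityMeasure (volume : Measure Ω)]

lemma Adm.integrable {p K : ℝ} {W : ℕ → ℕ → Ω → ℝ} (h : Adm p K W) (hp1 : 1 ≤ p) (i j : ℕ) :
    Integrable (W i j) := by
  refine ((integrable_const (1 : ℝ)).add (h.int i j)).mono' (h.meas i j).aestronglyMeasurable
    (Eventually.of_forall fun ω => ?_)
  have h0 := h.nonneg i j ω
  rw [Real.norm_eq_abs, abs_of_nonneg h0]
  simpa using rpow_le_add (p := 1) (by norm_num) hp1 h0 one_pos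

/-- A function whose `q`-th moment is controlled has a controlled `p`-th moment, `p ≤ q`. -/
lemma integral_rpow_le {p q τ : ℝ} (hp : 0 ≤ p) (hpq : p ≤ q) (hτ : 0 < τ) {R : Ω → ℝ}
    (hR0 : ∀ ω, 0 ≤ R ω) (hRm : Measurable R) (hRi : Integrable fun ω => R ω ^ q) :
    Integrable (fun ω => R ω ^ p) ∧
      ∫ ω, R ω ^ p ≤ τ ^ p + (∫ ω, R ω ^ q) * τ ^ (p - q) := by
  have hi : Integrable fun ω => τ ^ p + R ω ^ q * τ ^ (p - q) :=
    (integrable_const _).add (hRi.mul_const _)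
  have hle : ∀ ω, R ω ^ p ≤ τ ^ p + R ω ^ q * τ ^ (p - q) := fun ω =>
    rpow_le_add hp hpq (hR0 ω) hτ
  constructor
  · refine hi.mono' (hRm.pow_const p).aestronglyMeasurable (Eventually.of_forall fun ω => ?_)
    rw [Real.norm_eq_abs, abs_of_nonneg (Real.rpow_nonneg (hR0 ω) _)]
    exact hle ω
  · calc _ ≤ ∫ ω, (τ ^ p + R ω ^ q * τ ^ (p - q)) :=
          integral_mono_of_nonneg (Eventually.of_forall fun ω => Real.rpow_nonneg (hR0 ω) _) hi
            (Eventually.of_forall hle)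
      _ = _ := by
          rw [integral_add (integrable_const _) (hRi.mul_const _), integral_mul_const]
          simp

end

lemma integral_add_rpow_le {Ω : Type*} [MeasureSpace Ω] {p : ℝ} (hp1 : 1 ≤ p) (hp2 : p < 2) {R T : Ω → ℝ}
    (hR0 : ∀ ω, 0 ≤ R ω) (hT0 : ∀ ω, 0 ≤ T ω) (hRm : Measurable R) (hTm : Measurable T)
    (hR : Integrable fun ω => R ω ^ p) (hT : Integrable fun ω => T ω ^ p) :
    Integrable (fun ω => (R ω + T ω) ^ p) ∧
      ∫ ω, (R ω + T ω) ^ p ≤ 4 * ((∫ ω, R ω ^ p) + ∫ ω, T ω ^ p) := by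
  have hi : Integrable fun ω => 4 * (R ω ^ p + T ω ^ p) := (hR.add hT).const_mul 4
  have h0 : ∀ ω, 0 ≤ (R ω + T ω) ^ p := fun ω =>
    Real.rpow_nonneg (add_nonneg (hR0 ω) (hT0 ω)) _
  have hle : ∀ ω, (R ω + T ω) ^ p ≤ 4 * (R ω ^ p + T ω ^ p) := fun ω =>
    add_rpow_le hp1 hp2 (hR0 ω) (hT0 ω)
  constructor
  · refine hi.mono' ((hRm.add hTm).pow_const p).aestronglyMeasurable
      (Eventually.of_forall fun ω => ?_)
    rw [Real.norm_eq_abs, abs_of_nonneg (h0 ω)]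
    exact hle ω
  · calc _ ≤ ∫ ω, 4 * (R ω ^ p + T ω ^ p) :=
          integral_mono_of_nonneg (Eventually.of_forall h0) hi (Eventually.of_forall hle)
      _ = _ := by rw [integral_const_mul, integral_add hR hT]

section
variable {Ω : Type*} [MeasureSpace Ω] [IsProbabilityMeasure (volume : Measure Ω)]

/-- The maximal inequality of order `p`: under a summable-tails condition, the maximum of the
centred partial sums over a `2 ^ M × 2 ^ N` rectangle has `p`-th moment of order `2 ^ (M + N)`. -/
lemma maximal_rpow {p K : ℝ} (hp1 : 1 ≤ p) (hp2 : p < 2) (hK : 0 ≤ K) :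
    ∃ C : ℝ, 0 ≤ C ∧ ∀ W : ℕ → ℕ → Ω → ℝ, Adm p K W → ∀ (M N : ℕ) (γ : ℕ → ℝ),
      (∀ l, 0 ≤ γ l) → (∀ n, ∑ l ∈ range n, γ l ≤ 1) →
      (∀ i j l, volume.real {ω | lvl p (M + N) * 2 ^ l < W i j ω} * (lvl p (M + N) * 2 ^ l) ^ p
        ≤ γ l) →
      ∃ R : Ω → ℝ, (∀ ω, 0 ≤ R ω) ∧ Measurable R ∧ Integrable (fun ω => R ω ^ p) ∧
        ∫ ω, R ω ^ p ≤ C * 2 ^ (M + N) ∧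
        ∀ ω, ∀ u ≤ 2 ^ M, ∀ v ≤ 2 ^ N, |blk (fun x => x) W 0 0 u v ω| ≤ R ω := by
  obtain ⟨C1, hC1, h1⟩ := max_trunc_sq (Ω := Ω) hp1 hp2 hK
  obtain ⟨C2, hC2, h2⟩ := excess_rpow (Ω := Ω) hp1 hp2 hK
  refine ⟨4 * (4 * ((1 + C1) + C2) + 1), by positivity, fun W hW M N γ hγ hsum ht => ?_⟩
  obtain ⟨R, hR0, hRm, hRi, hRle, hR⟩ := h1 W hW M N
  obtain ⟨hSi, hSle⟩ := h2 W hW M N γ hγ hsum ht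
  set b := lvl p (M + N) with hb
  have hb0 : 0 < b := lvl_pos _ _
  have hbp : b ^ p = 2 ^ (M + N) := lvl_rpow hp1 _
  set P := range (2 ^ M) ×ˢ range (2 ^ N) with hP
  set S : Ω → ℝ := fun ω => ∑ x ∈ P, max (W x.1 x.2 ω - b) 0 with hS
  have hS0 : ∀ ω, 0 ≤ S ω := fun ω => Finset.sum_nonneg fun _ _ => le_max_right _ _
  have hm := hW.meas
  have hSm : Measurable S := by
    refine Finset.measurable_fun_sum _ fun x _ => ?_
    exact ((hm _ _).sub_const _).max measurable_const
  have hRi' : Integrable fun ω => R ω ^ (2 : ℝ) := by simpa using hRi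
  obtain ⟨a1, a2⟩ := integral_rpow_le (p := p) (by linarith) hp2.le hb0 hR0 hRm hRi'
  have a2' : ∫ ω, R ω ^ p ≤ (1 + C1) * 2 ^ (M + N) := by
    refine a2.trans ?_
    have e : b ^ 2 * b ^ (p - 2) = b ^ p := by
      rw [← Real.rpow_natCast, ← Real.rpow_add hb0]; norm_num
    calc b ^ p + (∫ ω, R ω ^ (2 : ℝ)) * b ^ (p - 2) ≤ b ^ p + (C1 * b ^ 2) * b ^ (p - 2) := by
          gcongr
          simpa using hRle
      _ = _ := by rw [mul_assoc, e, hbp]; ring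
  obtain ⟨b1, b2⟩ := integral_add_rpow_le hp1 hp2 hR0 hS0 hRm hSm a1 hSi
  obtain ⟨c1, c2⟩ := integral_add_rpow_le (Ω := Ω) (R := fun ω => R ω + S ω) (T := fun _ => b)
    hp1 hp2 (fun ω => add_nonneg (hR0 ω) (hS0 ω)) (fun _ => hb0.le) (hRm.add hSm) measurable_const
    b1 (integrable_const _)
  refine ⟨fun ω => R ω + S ω + b, fun ω => ?_, (hRm.add hSm).add_const _, c1, ?_, ?_⟩
  · have := hR0 ω
    have := hS0 ω
    positivity
  · refine c2.trans ?_
    simp only [integral_const, probReal_univ, one_smul, hbp]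
    change ∫ ω, S ω ^ p ≤ _ at hSle
    nlinarith
  · intro ω u hu v hv
    have hYi : ∀ i j, Integrable fun ω => max (W i j ω - b) 0 := fun i j =>
      ((hW.integrable hp1 i j).sub (integrable_const b)).pos_part
    have hfi : ∀ i j, Integrable fun ω => min (W i j ω) b := fun i j =>
      (hW.integrable hp1 i j).inf (integrable_const b)
    -- truncated part plus centred excess; the excess and its mean are nonnegative
    have hsplit : blk (fun x => x) W 0 0 u v ω = blk (fun x => min x b) W 0 0 u v ω
        + ((∑ i ∈ range u, ∑ j ∈ range v, max (W i j ω - b) 0)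
        - ∑ i ∈ range u, ∑ j ∈ range v, ∫ ω', max (W i j ω' - b) 0) := by
      simp only [blk, zero_add, ← Finset.sum_sub_distrib, ← Finset.sum_add_distrib]
      refine Finset.sum_congr rfl fun i _ => Finset.sum_congr rfl fun j _ => ?_
      have : ∫ ω', W i j ω' = (∫ ω', min (W i j ω') b) + ∫ ω', max (W i j ω' - b) 0 := by
        rw [← integral_add (hfi i j) (hYi i j)]
        congr 1
        ext ω'
        rw [max_sub_eq]; ring
      rw [this, max_sub_eq]
      ring
    have hsub : range u ×ˢ range v ⊆ P :=
      Finset.product_subset_product (range_subset_range.2 hu) (range_subset_range.2 hv)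
    have hY : ∑ i ∈ range u, ∑ j ∈ range v, max (W i j ω - b) 0 ≤ S ω := by
      rw [← Finset.sum_product (s := range u) (t := range v)
        (f := fun x => max (W x.1 x.2 ω - b) 0)]
      exact Finset.sum_le_sum_of_subset_of_nonneg hsub fun _ _ _ => le_max_right _ _
    have hEY : ∑ i ∈ range u, ∑ j ∈ range v, ∫ ω', max (W i j ω' - b) 0 ≤ b := by
      rw [← Finset.sum_product (s := range u) (t := range v)
        (f := fun x => ∫ ω', max (W x.1 x.2 ω' - b) 0)]
      calc _ ≤ ∑ x ∈ P, ∫ ω', max (W x.1 x.2 ω' - b) 0 :=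
            Finset.sum_le_sum_of_subset_of_nonneg hsub fun _ _ _ =>
              integral_nonneg fun _ => le_max_right _ _
        _ ≤ ∑ x ∈ P, b ^ (1 - p) := by
            refine Finset.sum_le_sum fun x _ => ?_
            refine integral_le_of_pointwise hW (g := fun w => max (w - b) 0) (by positivity)
              (fun w _ => le_max_right _ _) (fun w hw => ?_) _ _
            rw [max_sub_eq]
            exact excess_le hp1 hw hb0
        _ = b := by
            simp only [hP, sum_const, card_product, card_range, nsmul_eq_mul]
            push_cast
            rw [← pow_add, two_pow_mul_lvl hp1 (M + N)]
    have hY0 : 0 ≤ ∑ i ∈ range u, ∑ j ∈ range v, max (W i j ω - b) 0 :=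
      Finset.sum_nonneg fun _ _ => Finset.sum_nonneg fun _ _ => le_max_right _ _
    have hEY0 : 0 ≤ ∑ i ∈ range u, ∑ j ∈ range v, ∫ ω', max (W i j ω' - b) 0 :=
      Finset.sum_nonneg fun _ _ => Finset.sum_nonneg fun _ _ =>
        integral_nonneg fun _ => le_max_right _ _
    rw [hsplit]
    change _ ≤ R ω + S ω + b
    rw [add_assoc]
    refine (abs_add_le _ _).trans (add_le_add (hR ω u hu v hv) ?_)
    rw [abs_le]
    have := hS0 ω
    constructor <;> linarith

end

/-! ### The iterated logarithmic weight -/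

lemma log_two_ge_half : (1 : ℝ) / 2 ≤ Real.log 2 := by
  have := Real.log_two_gt_d9
  linarith

lemma rlog_pos (x : ℝ) : 0 < rlog x := Real.log_pos (by
  have := le_max_right x 2
  linarith)

lemma rlog_mono : Monotone rlog := fun x y h =>
  Real.log_le_log (by have := le_max_right x 2; linarith) (max_le_max_right _ h)

lemma itlog_rlog (k : ℕ) (x : ℝ) : itlog k (rlog x) = itlog (k + 1) x := by
  induction k with
  | zero => rfl
  | succ k ih => rw [itlog, ih]; rfl

lemma logNu2_zero (x : ℝ) : logNu2 0 x = x := by simp [logNu2, itlog]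

/-- The weight for `ν + 1` is obtained from the weight for `ν` by substituting `log x`; this recursion
carries positivity, monotonicity and summability along powers of two. -/
lemma logNu2_succ (ν : ℕ) (x : ℝ) : logNu2 (ν + 1) x = rlog x * logNu2 ν (rlog x) := by
  unfold logNu2
  rw [itlog_rlog, ← mul_assoc]
  congr 1
  have : ∀ (f : ℕ → ℝ) n, ∏ k ∈ Finset.Icc 1 n, f k = ∏ k ∈ range n, f (k + 1) := by
    intro f n
    rw [Finset.range_eq_Ico, Finset.prod_Ico_add' f 0 n 1]
    congr 1
  rw [this, this, Finset.prod_range_succ', mul_comm]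
  simp only [itlog_rlog]
  rfl

lemma logNu2_aux (ν : ℕ) : (∀ x, 0 < x → 0 < logNu2 ν x) ∧
    ∀ x y, 0 < x → x ≤ y → logNu2 ν x ≤ logNu2 ν y := by
  induction ν with
  | zero => simp [logNu2_zero]
  | succ ν ih =>
    refine ⟨fun x _ => ?_, fun x y _ h => ?_⟩
    · rw [logNu2_succ]
      exact mul_pos (rlog_pos x) (ih.1 _ (rlog_pos x))
    · rw [logNu2_succ, logNu2_succ]
      exact mul_le_mul (rlog_mono h) (ih.2 _ _ (rlog_pos x) (rlog_mono h))
        (ih.1 _ (rlog_pos x)).le (rlog_pos y).le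

lemma logNu2_pos {ν : ℕ} (hν : 1 ≤ ν) (x : ℝ) : 0 < logNu2 ν x := by
  obtain ⟨n, rfl⟩ := Nat.exists_eq_add_of_le' hν
  rw [logNu2_succ]
  exact mul_pos (rlog_pos x) ((logNu2_aux n).1 _ (rlog_pos x))

lemma logNu2_mono {ν : ℕ} (hν : 1 ≤ ν) : Monotone (logNu2 ν) := by
  obtain ⟨n, rfl⟩ := Nat.exists_eq_add_of_le' hν
  intro x y h
  rw [logNu2_succ, logNu2_succ]
  exact mul_le_mul (rlog_mono h) ((logNu2_aux n).2 _ _ (rlog_pos x) (rlog_mono h))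
    ((logNu2_aux n).1 _ (rlog_pos x)).le (rlog_pos y).le

/-- The weight `logNu2 ν` is summable along powers of two: Cauchy condensation turns the series
for `ν + 1` into the one for `ν`, and for `ν = 0` the series is geometric. -/
lemma summable_logNu2 (ν : ℕ) : Summable fun j : ℕ => 1 / logNu2 ν (2 ^ j) := by
  induction ν with
  | zero =>
    simp only [logNu2_zero]
    simpa [one_div, inv_pow] using summable_geometric_two
  | succ ν ih =>
    obtain ⟨hpos, hmono⟩ := logNu2_aux (ν + 1)
    obtain ⟨hpos', hmono'⟩ := logNu2_aux ν
    have h2 : ∀ j : ℕ, (0 : ℝ) < 2 ^ j := fun j => by positivity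
    rw [← summable_condensed_iff_of_nonneg (fun j => (one_div_pos.2 (hpos _ (h2 j))).le)
      (fun m n _ hmn => one_div_le_one_div_of_le (hpos _ (h2 m)) (hmono _ _ (h2 m)
        (pow_le_pow_right₀ (by norm_num) hmn)))]
    rw [← summable_nat_add_iff 1]
    refine (ih.mul_left 2).of_nonneg_of_le (fun k => ?_) fun k => ?_
    · exact mul_nonneg (h2 _).le (one_div_pos.2 (hpos _ (h2 _))).le
    · have e : rlog (2 ^ 2 ^ (k + 1)) = 2 ^ (k + 1) * Real.log 2 := by
        unfold rlog
        rw [max_eq_left, Real.log_pow]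
        · push_cast; rfl
        · calc (2 : ℝ) = 2 ^ 1 := by norm_num
            _ ≤ _ := pow_le_pow_right₀ (by norm_num) Nat.one_le_two_pow
      have hl : 2 ^ k ≤ 2 ^ (k + 1) * Real.log 2 := by
        have := log_two_ge_half
        have := h2 k
        rw [pow_succ]
        nlinarith
      rw [logNu2_succ, e]
      have h3 := hmono' _ _ (h2 k) hl
      have h4 := hpos' _ (h2 k)
      rw [mul_one_div, mul_one_div, div_le_div_iff₀ (mul_pos ((h2 k).trans_le hl)
        (h4.trans_le h3)) h4]
      calc 2 ^ (k + 1) * logNu2 ν (2 ^ k) = 2 * (2 ^ k * logNu2 ν (2 ^ k)) := by ring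
        _ ≤ 2 * (2 ^ (k + 1) * Real.log 2 * logNu2 ν (2 ^ (k + 1) * Real.log 2)) := by
          have := h2 k
          gcongr

/-! ### Condition `(H_2)` on rectangles -/

section
variable {Ω : Type*} [MeasureSpace Ω] [IsProbabilityMeasure (volume : Measure Ω)]

/-- Condition `(H_2)` applied to one bounded monotone function over a rectangle. -/
lemma rect_of_condH {C : ℝ} {X : ℕ → ℕ → Ω → ℝ}
    (hmeas : ∀ m n : ℕ, 1 ≤ m → 1 ≤ n → Measurable (X m n))
    (hH : CondHWith 1 C fun k : PIdx => X k.1.1 k.1.2) {h : ℝ → ℝ} (hm : Monotone h) {c B : ℝ}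
    (hc : ∀ i j ω, |h (X (i + 1) (j + 1) ω)| ≤ c)
    (hB : ∀ i j, ∫ ω, h (X (i + 1) (j + 1) ω) ^ 2 ≤ B) (a b u w : ℕ) :
    ∫ ω, (∑ i ∈ range u, ∑ j ∈ range w, (h (X (a + i + 1) (b + j + 1) ω)
      - ∫ ω', h (X (a + i + 1) (b + j + 1) ω'))) ^ 2 ≤ 2 * |C| * (u * w) * B := by
  have hB0 : 0 ≤ B := (integral_nonneg fun ω => sq_nonneg _).trans (hB 0 0)
  rcases Nat.eq_zero_or_pos u with rfl | hu
  · simp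
  rcases Nat.eq_zero_or_pos w with rfl | hw
  · simp
  -- the index set `PIdx` starts at `1`, the rectangles at `0`
  set e : ℕ × ℕ ↪ PIdx := ⟨fun x => ⟨(a + x.1 + 1, b + x.2 + 1), by simp⟩, by
    rintro ⟨x1, x2⟩ ⟨y1, y2⟩ hxy
    simp only [Subtype.mk.injEq, Prod.mk.injEq] at hxy ⊢
    omega⟩ with he
  set I := (range u ×ˢ range w).map e with hI
  have hIne : I.Nonempty := by
    rw [hI, Finset.map_nonempty]
    exact ⟨(0, 0), by simp [hu, hw]⟩
  have hcard : (I.card : ℝ) = u * w := by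
    rw [hI, Finset.card_map, Finset.card_product, card_range, card_range]; push_cast; rfl
  have hXm : ∀ l : PIdx, Measurable fun ω => h (X l.1.1 l.1.2 ω) := fun l =>
    hm.measurable.comp (hmeas _ _ l.2.1 l.2.2)
  have hl : ∀ l : PIdx, ∃ i j, l.1.1 = i + 1 ∧ l.1.2 = j + 1 := fun l =>
    ⟨l.1.1 - 1, l.1.2 - 1, by have := l.2.1; omega, by have := l.2.2; omega⟩
  have hbd : ∀ (l : PIdx) ω, |h (X l.1.1 l.1.2 ω)| ≤ c := by
    intro l ω
    obtain ⟨i, j, h1, h2⟩ := hl l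
    rw [h1, h2]; exact hc i j ω
  have hL : ∀ (l : PIdx) (q : ℝ≥0∞), MemLp (fun ω => h (X l.1.1 l.1.2 ω)) q := fun l q =>
    MemLp.of_bound (hXm l).aestronglyMeasurable c (Eventually.of_forall fun ω => hbd l ω)
  have hS : ∀ (l : PIdx), ∫ ω, h (X l.1.1 l.1.2 ω) ^ 2 ≤ B := by
    intro l
    obtain ⟨i, j, h1, h2⟩ := hl l
    rw [h1, h2]; exact hB i j
  have key := hH I hIne (fun _ => h) (fun _ _ => hm) (fun l _ => (hL l 1).integrable le_rfl)
    (fun l _ => (hL l 2).integrable_sq)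
    (fun l _ => by simpa only [mul_one, Real.rpow_two, sq_abs] using (hL l 2).integrable_sq)
    (by
      simp only [mul_one, Real.rpow_two, sq_abs]
      exact (memLp_finsetSum _ fun l _ => (hL l 2).sub (memLp_const _)).integrable_sq)
  simp only [mul_one, Real.rpow_two, sq_abs, Real.rpow_one] at key
  have hsup : I.sup' hIne (fun l : PIdx => ∫ ω, h (X l.1.1 l.1.2 ω) ^ 2) ≤ B :=
    Finset.sup'_le _ _ fun l _ => hS l
  have hsup0 : 0 ≤ I.sup' hIne (fun l : PIdx => ∫ ω, h (X l.1.1 l.1.2 ω) ^ 2) := by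
    obtain ⟨l, hlI⟩ := hIne
    exact (integral_nonneg fun ω => sq_nonneg _).trans
      (Finset.le_sup' (fun l : PIdx => ∫ ω, h (X l.1.1 l.1.2 ω) ^ 2) hlI)
  have hsum : ∀ ω, ∑ i ∈ range u, ∑ j ∈ range w, (h (X (a + i + 1) (b + j + 1) ω)
      - ∫ ω', h (X (a + i + 1) (b + j + 1) ω'))
      = ∑ l ∈ I, (h (X l.1.1 l.1.2 ω) - ∫ ω', h (X l.1.1 l.1.2 ω')) := by
    intro ω
    rw [hI, Finset.sum_map, Finset.sum_product]
    rfl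
  simp only [hsum]
  refine key.trans ?_
  rw [hcard]
  set s := I.sup' hIne (fun l : PIdx => ∫ ω, h (X l.1.1 l.1.2 ω) ^ 2)
  calc C * ((u * w : ℝ) * s + u * w * s) ≤ |C| * ((u * w : ℝ) * s + u * w * s) := by
        gcongr; exact le_abs_self C
    _ ≤ |C| * ((u * w : ℝ) * B + u * w * B) := by gcongr
    _ = _ := by ring

lemma rectVar_of_monotone {C : ℝ} {X : ℕ → ℕ → Ω → ℝ}
    (hmeas : ∀ m n : ℕ, 1 ≤ m → 1 ≤ n → Measurable (X m n))
    (hH : CondHWith 1 C fun k : PIdx => X k.1.1 k.1.2) {g : ℝ → ℝ} (hg : Monotone g) :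
    RectVar (2 * |C|) fun i j ω => g (X (i + 1) (j + 1) ω) :=
  fun _ _ _ hf hc hB a b u w => rect_of_condH hmeas hH (hf.comp hg) hc hB a b u w

/-- A nonincreasing image of the array also satisfies the variance inequality, since the sums are
only replaced by their negatives. -/
lemma rectVar_of_antitone {C : ℝ} {X : ℕ → ℕ → Ω → ℝ}
    (hmeas : ∀ m n : ℕ, 1 ≤ m → 1 ≤ n → Measurable (X m n))
    (hH : CondHWith 1 C fun k : PIdx => X k.1.1 k.1.2) {g : ℝ → ℝ} (hg : Antitone g) :
    RectVar (2 * |C|) fun i j ω => g (X (i + 1) (j + 1) ω) := by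
  intro f c B hf hc hB a b u w
  have hm : Monotone fun x => -f (g x) := fun x y h => neg_le_neg (hf (hg h))
  have := rect_of_condH hmeas hH hm (c := c) (B := B) (by simpa only [abs_neg] using hc)
    (by simpa only [neg_sq] using hB) a b u w
  refine le_of_eq_of_le ?_ this
  congr 1
  ext ω
  rw [← neg_sq]
  congr 1
  simp only [← Finset.sum_neg_distrib, integral_neg]
  refine Finset.sum_congr rfl fun i _ => Finset.sum_congr rfl fun j _ => ?_
  ring

end

/-! ### Mean convergence for nonnegative arrays -/

/-- A function bounded by a multiple of `x ^ p * logNu2 ν x` inherits the corresponding moment bound. -/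
lemma integral_le_of_dom {Ω : Type*} [MeasureSpace Ω] {p Mo : ℝ} {ν : ℕ} {u : Ω → ℝ} (hm : Measurable u)
    (h0 : ∀ ω, 0 ≤ u ω) (hi : Integrable fun ω => u ω ^ p * logNu2 ν (u ω))
    (hle : ∫ ω, u ω ^ p * logNu2 ν (u ω) ≤ Mo) {g : ℝ → ℝ} (hg : Measurable g) {c : ℝ}
    (hc : 0 ≤ c) (hg0 : ∀ x, 0 ≤ x → 0 ≤ g x)
    (hgc : ∀ x, 0 ≤ x → g x ≤ c * (x ^ p * logNu2 ν x)) :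
    Integrable (fun ω => g (u ω)) ∧ ∫ ω, g (u ω) ≤ c * Mo := by
  have hint : Integrable fun ω => g (u ω) := by
    refine (hi.const_mul c).mono' (hg.comp hm).aestronglyMeasurable
      (Eventually.of_forall fun ω => ?_)
    rw [Real.norm_eq_abs, abs_of_nonneg (hg0 _ (h0 ω))]
    exact hgc _ (h0 ω)
  refine ⟨hint, ?_⟩
  calc ∫ ω, g (u ω) ≤ ∫ ω, c * (u ω ^ p * logNu2 ν (u ω)) :=
        integral_mono hint (hi.const_mul c) fun ω => hgc _ (h0 ω)
    _ ≤ c * Mo := by rw [integral_const_mul]; gcongr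

section
variable {Ω : Type*} [MeasureSpace Ω] [IsProbabilityMeasure (volume : Measure Ω)]

/-- The maximal partial sums of a nonnegative array are `o` of the normalisation in the mean of
order `p`. The array is cut at a fixed high level `A`: the bounded part satisfies the maximal
inequality with a larger exponent, and the excess over `A` is small in `L ^ p` uniformly. -/
lemma one_sided {p : ℝ} (hp1 : 1 ≤ p) (hp2 : p < 2) {ν : ℕ} (hν : 1 ≤ ν) {K Mo : ℝ} (hK : 0 ≤ K)
    {U : ℕ → ℕ → Ω → ℝ} (hUm : ∀ i j, Measurable (U i j)) (hU0 : ∀ i j ω, 0 ≤ U i j ω)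
    (hvar : ∀ g : ℝ → ℝ, Monotone g → RectVar K fun i j ω => g (U i j ω))
    (hUi : ∀ i j, Integrable fun ω => U i j ω ^ p * logNu2 ν (U i j ω))
    (hUle : ∀ i j, ∫ ω, U i j ω ^ p * logNu2 ν (U i j ω) ≤ Mo) {ε : ℝ} (hε : 0 < ε) :
    ∃ k0 : ℕ, ∀ M N : ℕ, k0 ≤ M + N → ∃ R : Ω → ℝ, (∀ ω, 0 ≤ R ω) ∧ Measurable R ∧
      Integrable (fun ω => R ω ^ p) ∧ ∫ ω, R ω ^ p ≤ ε * 2 ^ (M + N) ∧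
      ∀ ω, ∀ u ≤ 2 ^ M, ∀ v ≤ 2 ^ N, |blk (fun x => x) U 0 0 u v ω| ≤ R ω := by
  have hp0 : 0 < p := by linarith
  -- an exponent strictly between `p` and `2` for the bounded part
  set q := (p + 2) / 2 with hq
  have hpq : p < q := by rw [hq]; linarith
  have hq2 : q < 2 := by rw [hq]; linarith
  have hq1 : 1 ≤ q := by linarith
  obtain ⟨C, hC, hcore⟩ := maximal_rpow (Ω := Ω) hp1 hp2 hK
  obtain ⟨C', hC', hcore'⟩ := maximal_rpow (Ω := Ω) hq1 hq2 hK
  have gpos := logNu2_pos hν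
  have gmono := logNu2_mono hν
  have hsumm := summable_logNu2 ν
  have hMo : 0 ≤ Mo := (integral_nonneg fun ω => mul_nonneg (Real.rpow_nonneg (hU0 0 0 ω) _)
    (gpos _).le).trans (hUle 0 0)
  -- the excess over `A` is rescaled by `1 / l`, so `l ^ p * C` must be small compared with `ε`
  obtain ⟨r, hr⟩ := exists_pow_lt_of_lt_one (show 0 < ε / (8 * (C + 1)) by positivity)
    (show (1 / 2 : ℝ) < 1 by norm_num)
  set l : ℝ := (1 / 2) ^ r with hl
  have hl0 : 0 < l := by positivity
  have hl1 : l ≤ 1 := pow_le_one₀ (by norm_num) (by norm_num)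
  have hlp0 : 0 < l ^ p := by positivity
  have hlp : l ^ p ≤ l := by
    simpa using Real.rpow_le_rpow_of_exponent_ge hl0 hl1 hp1
  have hlC : 4 * (l ^ p * C) ≤ ε / 2 := by
    have h1 : l * (8 * (C + 1)) < ε := (lt_div_iff₀ (by positivity)).1 hr
    nlinarith
  -- `A = 2 ^ a` is so large that the rescaled excess has `p`-th moments at most `1`
  obtain ⟨a, ha⟩ : ∃ a : ℕ, Mo * (1 / logNu2 ν (2 ^ a)) < l ^ p := by
    have := (hsumm.tendsto_atTop_zero.const_mul Mo).eventually_lt_const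
      (show Mo * 0 < l ^ p by simpa using hlp0)
    exact this.exists
  set A : ℝ := 2 ^ a with hA
  have hA1 : 1 ≤ A := one_le_pow₀ (by norm_num)
  have hA0 : 0 < A := by linarith
  -- beyond the scale `2 ^ d` the tails of the rescaled excess sum to at most `1`
  obtain ⟨d, hd⟩ : ∃ d : ℕ, Mo / l ^ p * ∑' k : ℕ, 1 / logNu2 ν (2 ^ (k + d)) < 1 := by
    have := ((_root_.tendsto_sum_nat_add fun j : ℕ => 1 / logNu2 ν (2 ^ j)).const_mul
      (Mo / l ^ p)).eventually_lt_const (show Mo / l ^ p * 0 < 1 by simp)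
    exact this.exists
  -- large rectangles, for which the gain from the exponent `q > p` absorbs the constant `A ^ p`
  obtain ⟨k1, hk1⟩ : ∃ k1 : ℕ, ∀ k ≥ k1,
      4 * A ^ p * (1 + C') * ((2 : ℝ) ^ (p / q - 1)) ^ k ≤ ε / 2 := by
    have hlt : (2 : ℝ) ^ (p / q - 1) < 1 := by
      apply Real.rpow_lt_one_of_one_lt_of_neg (by norm_num)
      have : p / q < 1 := (div_lt_one (by linarith)).2 hpq
      linarith
    have := ((tendsto_pow_atTop_nhds_zero_of_lt_one (by positivity) hlt).const_mul
      (4 * A ^ p * (1 + C'))).eventually_le_const (show 4 * A ^ p * (1 + C') * 0 < ε / 2 by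
        rw [mul_zero]; positivity)
    exact eventually_atTop.1 this
  refine ⟨max k1 (2 * (d + r)), fun M N hMN => ?_⟩
  have hMN1 : k1 ≤ M + N := (le_max_left _ _).trans hMN
  have hMN2 : 2 * (d + r) ≤ M + N := (le_max_right _ _).trans hMN
  -- the bounded part and the rescaled excess
  set W1 : ℕ → ℕ → Ω → ℝ := fun i j ω => min (U i j ω) A / A with hW1
  set W2 : ℕ → ℕ → Ω → ℝ := fun i j ω => max (U i j ω - A) 0 / l with hW2
  have W1le : ∀ i j ω, W1 i j ω ≤ 1 := fun i j ω =>
    (div_le_one hA0).2 (min_le_right _ _)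
  have W1nn : ∀ i j ω, 0 ≤ W1 i j ω := fun i j ω => div_nonneg (le_min (hU0 i j ω) hA0.le) hA0.le
  have W1m : ∀ i j, Measurable (W1 i j) := fun i j =>
    ((hUm i j).min measurable_const).div_const _
  have W2nn : ∀ i j ω, 0 ≤ W2 i j ω := fun i j ω => div_nonneg (le_max_right _ _) hl0.le
  have W2m : ∀ i j, Measurable (W2 i j) := fun i j =>
    (((hUm i j).sub_const _).max measurable_const).div_const _
  have W1p : ∀ i j ω, W1 i j ω ^ q ≤ 1 := fun i j ω =>
    Real.rpow_le_one (W1nn i j ω) (W1le i j ω) (by linarith)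
  have W1int : ∀ i j, Integrable fun ω => W1 i j ω ^ q := fun i j =>
    (integrable_const (1 : ℝ)).mono' ((W1m i j).pow_const q).aestronglyMeasurable
      (Eventually.of_forall fun ω => by
        rw [Real.norm_eq_abs, abs_of_nonneg (Real.rpow_nonneg (W1nn i j ω) _)]
        exact W1p i j ω)
  have adm1 : Adm q K W1 := by
    refine ⟨W1m, W1nn, W1int, fun i j => ?_, hvar (fun x => min x A / A) fun x y h =>
      div_le_div_of_nonneg_right (min_le_min_right A h) hA0.le⟩
    calc _ ≤ ∫ ω : Ω, (1 : ℝ) := integral_mono (W1int i j) (integrable_const _) (W1p i j)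
      _ = 1 := by simp
  have W2dom : ∀ i j, Integrable (fun ω => W2 i j ω ^ p) ∧
      ∫ ω, W2 i j ω ^ p ≤ 1 / (l ^ p * logNu2 ν A) * Mo := by
    intro i j
    have := gpos A
    refine integral_le_of_dom (hUm i j) (hU0 i j) (hUi i j) (hUle i j)
      (g := fun x => (max (x - A) 0 / l) ^ p) (by fun_prop) (by positivity)
      (fun x hx => Real.rpow_nonneg (div_nonneg (le_max_right _ _) hl0.le) _) fun x hx => ?_
    have hx' : 0 ≤ x ^ p * logNu2 ν x := mul_nonneg (Real.rpow_nonneg hx _) (gpos _).le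
    rcases le_total x A with h | h
    · rw [max_eq_right (by linarith), zero_div, Real.zero_rpow hp0.ne']
      positivity
    · rw [max_eq_left (by linarith), Real.div_rpow (by linarith) hl0.le, one_div_mul_eq_div,
        div_le_div_iff₀ hlp0 (by positivity)]
      have h1 : (x - A) ^ p ≤ x ^ p := Real.rpow_le_rpow (by linarith) (by linarith) hp0.le
      have h2 := gmono h
      calc (x - A) ^ p * (l ^ p * logNu2 ν A) ≤ x ^ p * (l ^ p * logNu2 ν x) := by gcongr
        _ = _ := by ring
  have adm2 : Adm p K W2 := by
    refine ⟨W2m, W2nn, fun i j => (W2dom i j).1, fun i j => (W2dom i j).2.trans ?_,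
      hvar (fun x => max (x - A) 0 / l) fun x y h =>
      div_le_div_of_nonneg_right (max_le_max_right 0 (by linarith)) hl0.le⟩
    have := gpos A
    rw [mul_one_div, div_lt_iff₀ this] at ha
    rw [one_div_mul_eq_div, div_le_one (by positivity)]
    exact ha.le
  -- the bounded part never reaches the truncation levels, so it has no tails
  obtain ⟨R1, hR1nn, hR1m, hR1i, hR1le, hR1⟩ := hcore' W1 adm1 M N (fun _ => 0) (fun _ => le_rfl)
    (fun n => by simp) (fun i j k => by
      have hge : 1 ≤ lvl q (M + N) * 2 ^ k :=
        one_le_mul_of_one_le_of_one_le (one_le_lvl hq1 _) (one_le_pow₀ (by norm_num))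
      have : {ω | lvl q (M + N) * 2 ^ k < W1 i j ω} = ∅ := by
        ext ω
        simp only [Set.mem_ofPred_eq, Set.mem_empty_iff_false, iff_false, not_lt]
        exact (W1le i j ω).trans hge
      simp [this])
  have hlvl : ∀ k : ℕ, 2 ^ (k + d) ≤ l * (lvl p (M + N) * 2 ^ k) := by
    intro k
    have h1 : (2 : ℝ) ^ (d + r) ≤ lvl p (M + N) := by
      unfold lvl
      rw [← Real.rpow_natCast]
      apply Real.rpow_le_rpow_of_exponent_le (by norm_num)
      rw [le_div_iff₀ hp0]
      have h2 : (2 : ℝ) * ((d + r : ℕ) : ℝ) ≤ ((M + N : ℕ) : ℝ) := by exact_mod_cast hMN2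
      have h3 : (0 : ℝ) ≤ ((d + r : ℕ) : ℝ) := by positivity
      nlinarith
    have h2 : l * 2 ^ r = 1 := by rw [hl, ← mul_pow]; norm_num
    calc (2 : ℝ) ^ (k + d) = l * 2 ^ r * (2 ^ d * 2 ^ k) := by rw [h2]; ring
      _ = l * (2 ^ (d + r) * 2 ^ k) := by ring
      _ ≤ _ := by gcongr
  obtain ⟨R2, hR2nn, hR2m, hR2i, hR2le, hR2⟩ := hcore W2 adm2 M N
    (fun k => Mo / l ^ p * (1 / logNu2 ν (2 ^ (k + d))))
    (fun k => mul_nonneg (by positivity) (one_div_pos.2 (gpos _)).le)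
    (fun n => by
      rw [← Finset.mul_sum]
      refine le_trans ?_ hd.le
      refine mul_le_mul_of_nonneg_left ?_ (by positivity)
      exact ((summable_nat_add_iff d).2 hsumm).sum_le_tsum _ fun k _ =>
        (one_div_pos.2 (gpos _)).le)
    (fun i j k => by
      set y := lvl p (M + N) * 2 ^ k with hy
      have hy0 : 0 < y := mul_pos (lvl_pos _ _) (by positivity)
      have hgy := gpos (l * y)
      have hms : MeasurableSet {ω | y < W2 i j ω} := measurableSet_lt measurable_const (W2m i j)
      have h1 := (integral_le_of_dom (hUm i j) (hU0 i j) (hUi i j) (hUle i j)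
        (g := fun x => if y < max (x - A) 0 / l then y ^ p else 0)
        (c := 1 / (l ^ p * logNu2 ν (l * y)))
        (by
          refine Measurable.ite (measurableSet_lt measurable_const (by fun_prop))
            measurable_const measurable_const) (by positivity)
        (fun x hx => by split_ifs <;> positivity)
        (fun x hx => by
          have hx' : 0 ≤ x ^ p * logNu2 ν x := mul_nonneg (Real.rpow_nonneg hx _) (gpos _).le
          split_ifs with h
          · rw [lt_div_iff₀ hl0] at h
            have hlt : l * y ≤ x := by
              rcases lt_max_iff.1 h with h | h <;> nlinarith
            rw [one_div_mul_eq_div, le_div_iff₀ (by positivity)]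
            have h2 := gmono hlt
            have h3 : (l * y) ^ p ≤ x ^ p := Real.rpow_le_rpow (by positivity) hlt hp0.le
            calc y ^ p * (l ^ p * logNu2 ν (l * y)) = (l * y) ^ p * logNu2 ν (l * y) := by
                  rw [Real.mul_rpow hl0.le hy0.le]; ring
              _ ≤ _ := by gcongr
          · positivity)).2
      have h2 : ∫ ω, (if y < max (U i j ω - A) 0 / l then y ^ p else 0)
          = volume.real {ω | y < W2 i j ω} * y ^ p := by
        rw [← smul_eq_mul, ← integral_indicator_const _ hms]
        rfl
      rw [h2] at h1
      refine h1.trans ?_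
      have h3 := gmono (hlvl k)
      have h4 := gpos (2 ^ (k + d))
      rw [one_div_mul_eq_div, mul_one_div, div_div]
      gcongr)
  have hW1i := adm1.integrable hq1
  have hW2i := adm2.integrable hp1
  obtain ⟨a1, a2⟩ := integral_rpow_le hp0.le hpq.le (lvl_pos q (M + N)) hR1nn hR1m hR1i
  have sR1 : ∀ ω, (A * R1 ω) ^ p = A ^ p * R1 ω ^ p := fun ω => Real.mul_rpow hA0.le (hR1nn ω)
  have sR2 : ∀ ω, (l * R2 ω) ^ p = l ^ p * R2 ω ^ p := fun ω => Real.mul_rpow hl0.le (hR2nn ω)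
  obtain ⟨b1, b2⟩ := integral_add_rpow_le hp1 hp2 (R := fun ω => A * R1 ω)
    (T := fun ω => l * R2 ω) (fun ω => mul_nonneg hA0.le (hR1nn ω))
    (fun ω => mul_nonneg hl0.le (hR2nn ω)) (hR1m.const_mul A) (hR2m.const_mul l)
    (by simp only [sR1]; exact a1.const_mul _) (by simp only [sR2]; exact hR2i.const_mul _)
  refine ⟨fun ω => A * R1 ω + l * R2 ω, fun ω => ?_, (hR1m.const_mul A).add (hR2m.const_mul l),
    b1, ?_, ?_⟩
  · have := hR1nn ω
    have := hR2nn ω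
    positivity
  · simp only [sR1, sR2, integral_const_mul] at b2
    refine b2.trans ?_
    have e1 : lvl q (M + N) ^ q * lvl q (M + N) ^ (p - q) = lvl q (M + N) ^ p := by
      rw [← Real.rpow_add (lvl_pos _ _)]; ring_nf
    have e2 : lvl q (M + N) ^ p = ((2 : ℝ) ^ (p / q - 1)) ^ (M + N) * 2 ^ (M + N) := by
      unfold lvl
      rw [← mul_pow, ← Real.rpow_natCast, ← Real.rpow_mul (by norm_num),
        ← Real.rpow_add_one (by norm_num), ← Real.rpow_mul (by norm_num)]
      congr 1
      ring
    have a3 : ∫ ω, R1 ω ^ p ≤ (1 + C') * lvl q (M + N) ^ p := by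
      refine a2.trans ?_
      rw [← lvl_rpow hq1] at hR1le
      have := lvl_pos q (M + N)
      calc _ ≤ lvl q (M + N) ^ p + (C' * lvl q (M + N) ^ q) * lvl q (M + N) ^ (p - q) := by
            gcongr
        _ = _ := by rw [mul_assoc, e1]; ring
    rw [e2] at a3
    have hk := hk1 _ hMN1
    have hAp : 0 < A ^ p := by positivity
    set Z := ((2 : ℝ) ^ (p / q - 1)) ^ (M + N)
    have hT : (0 : ℝ) < 2 ^ (M + N) := by positivity
    set T : ℝ := 2 ^ (M + N)
    calc 4 * (A ^ p * (∫ ω, R1 ω ^ p) + l ^ p * ∫ ω, R2 ω ^ p)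
        ≤ 4 * (A ^ p * ((1 + C') * (Z * T)) + l ^ p * (C * T)) := by gcongr
      _ = (4 * A ^ p * (1 + C') * Z) * T + 4 * (l ^ p * C) * T := by ring
      _ ≤ ε / 2 * T + ε / 2 * T := by gcongr
      _ = _ := by ring
  · intro ω u hu v hv
    have hsplit : blk (fun x => x) U 0 0 u v ω = A * blk (fun x => x) W1 0 0 u v ω
        + l * blk (fun x => x) W2 0 0 u v ω := by
      have hU : ∀ i j ω, U i j ω = A * W1 i j ω + l * W2 i j ω := fun i j ω => by
        simp only [hW1, hW2, max_sub_eq]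
        field_simp
        ring
      simp only [blk, zero_add, Finset.mul_sum, ← Finset.sum_add_distrib]
      refine Finset.sum_congr rfl fun i _ => Finset.sum_congr rfl fun j _ => ?_
      have : ∫ ω', U i j ω' = A * (∫ ω', W1 i j ω') + l * ∫ ω', W2 i j ω' := by
        simp only [hU]
        rw [integral_add ((hW1i i j).const_mul A) ((hW2i i j).const_mul l),
          integral_const_mul, integral_const_mul]
      rw [this, hU i j ω]
      ring
    rw [hsplit]
    refine (abs_add_le _ _).trans ?_
    rw [abs_mul, abs_mul, abs_of_pos hA0, abs_of_pos hl0]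
    exact add_le_add (mul_le_mul_of_nonneg_left (hR1 ω u hu v hv) hA0.le)
      (mul_le_mul_of_nonneg_left (hR2 ω u hu v hv) hl0.le)

end

/-! ### The maximum of the partial sums -/

lemma maxDS_nonneg (f : ℕ → ℕ → ℝ) (m n : ℕ) : 0 ≤ maxDS f m n := NNReal.coe_nonneg _

lemma maxDS_le {f : ℕ → ℕ → ℝ} {m n : ℕ} {B : ℝ} (hB : 0 ≤ B)
    (h : ∀ u ≤ m, ∀ v ≤ n, |∑ i ∈ range u, ∑ j ∈ range v, f (i + 1) (j + 1)| ≤ B) :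
    maxDS f m n ≤ B := by
  have e : ∀ (g : ℕ → ℝ) n, ∑ k ∈ Finset.Icc 1 n, g k = ∑ k ∈ range n, g (k + 1) := by
    intro g n
    rw [Finset.range_eq_Ico, Finset.sum_Ico_add' g 0 n 1]
    congr 1
  unfold maxDS maxNN
  rw [← Real.coe_toNNReal B hB, NNReal.coe_le_coe]
  refine Finset.sup_le fun x hx => Real.toNNReal_le_toNNReal ?_
  simp only [mem_product, Finset.mem_Icc] at hx
  simp only [e]
  exact h _ hx.1.2 _ hx.2.2

/-! ### Mean convergence of order `p` -/

/-- Pyke–Root-type mean convergence theorem for dependent random fields under a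
bounded moment condition. -/
theorem pyke_root_bounded_moments
    {Ω : Type*} [MeasureSpace Ω] [IsProbabilityMeasure (volume : Measure Ω)]
    (p : ℝ) (hp1 : 1 ≤ p) (hp2 : p < 2) (ν : ℕ) (hν : 1 ≤ ν)
    (X : ℕ → ℕ → Ω → ℝ)
    (hmeas : ∀ m n : ℕ, 1 ≤ m → 1 ≤ n → Measurable (X m n))
    (hH : CondH 1 fun k : PIdx => X k.1.1 k.1.2)
    (hmom : ∃ M : ℝ, ∀ m n : ℕ, 1 ≤ m → 1 ≤ n →
      (Integrable fun ω => |X m n ω| ^ p * logNu2 ν |X m n ω|) ∧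
      ∫ ω, |X m n ω| ^ p * logNu2 ν |X m n ω| ≤ M) :
    ∀ ε : ℝ, 0 < ε → ∃ N : ℕ, ∀ m n : ℕ, 1 ≤ m → 1 ≤ n → N ≤ max m n →
      ∫ ω, (maxDS (fun i j => X i j ω - ∫ ω', X i j ω') m n /
        ((m * n : ℕ) : ℝ) ^ (1 / p)) ^ p ≤ ε := by
  intro ε hε
  have hp0 : 0 < p := by linarith
  obtain ⟨C, hC⟩ := hH
  obtain ⟨Mo, hMo⟩ := hmom
  have gpos := logNu2_pos hν
  have gmono := logNu2_mono hν
  have hXm : ∀ i j, Measurable (X (i + 1) (j + 1)) := fun i j => hmeas _ _ (by simp) (by simp)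
  -- the positive and the negative part of the array satisfy the same moment bound
  have part : ∀ φ : ℝ → ℝ, Measurable φ → (∀ x, 0 ≤ φ x) → (∀ x, φ x ≤ |x|) → ∀ i j,
      (Integrable fun ω => φ (X (i + 1) (j + 1) ω)) ∧
      (Integrable fun ω => φ (X (i + 1) (j + 1) ω) ^ p * logNu2 ν (φ (X (i + 1) (j + 1) ω))) ∧
      ∫ ω, φ (X (i + 1) (j + 1) ω) ^ p * logNu2 ν (φ (X (i + 1) (j + 1) ω)) ≤ Mo := by
    intro φ hφm hφ0 hφ i j
    obtain ⟨h1, h2⟩ := hMo (i + 1) (j + 1) (by simp) (by simp)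
    set x := X (i + 1) (j + 1) with hx
    have hxm : Measurable x := hXm i j
    have hle : ∀ ω, φ (x ω) ^ p * logNu2 ν (φ (x ω)) ≤ |x ω| ^ p * logNu2 ν |x ω| := fun ω =>
      mul_le_mul (Real.rpow_le_rpow (hφ0 _) (hφ _) hp0.le) (gmono (hφ _)) (gpos _).le
        (Real.rpow_nonneg (abs_nonneg _) _)
    have hi : Integrable fun ω => φ (x ω) ^ p * logNu2 ν (φ (x ω)) := by
      refine h1.mono' (((hφm.comp hxm).pow_const p).mul
        (gmono.measurable.comp (hφm.comp hxm))).aestronglyMeasurable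
        (Eventually.of_forall fun ω => ?_)
      rw [Real.norm_eq_abs, abs_of_nonneg (mul_nonneg (Real.rpow_nonneg (hφ0 _) _) (gpos _).le)]
      exact hle ω
    refine ⟨?_, hi, (integral_mono hi h1 hle).trans h2⟩
    refine ((integrable_const (1 : ℝ)).add (h1.const_mul (1 / logNu2 ν 0))).mono'
      (hφm.comp hxm).aestronglyMeasurable (Eventually.of_forall fun ω => ?_)
    rw [Real.norm_eq_abs, abs_of_nonneg (hφ0 _)]
    have h3 := rpow_le_add (p := 1) (by norm_num) hp1 (abs_nonneg (x ω)) one_pos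
    simp only [Real.rpow_one, Real.one_rpow, mul_one] at h3
    have h4 : |x ω| ^ p ≤ 1 / logNu2 ν 0 * (|x ω| ^ p * logNu2 ν |x ω|) := by
      rw [one_div_mul_eq_div, le_div_iff₀ (gpos 0)]
      exact mul_le_mul_of_nonneg_left (gmono (abs_nonneg _)) (Real.rpow_nonneg (abs_nonneg _) _)
    exact (hφ _).trans (by simp only [Pi.add_apply]; linarith)
  have mp : Monotone fun x : ℝ => max x 0 := fun x y h => max_le_max_right 0 h
  have mn : Antitone fun x : ℝ => max (-x) 0 := fun x y h => max_le_max_right 0 (neg_le_neg h)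
  have partp := part (fun x => max x 0) mp.measurable (fun _ => le_max_right _ _)
    (fun x => max_le (le_abs_self x) (abs_nonneg x))
  have partn := part (fun x => max (-x) 0) mn.measurable (fun _ => le_max_right _ _)
    (fun x => max_le (neg_le_abs x) (abs_nonneg x))
  have hK : 0 ≤ 2 * |C| := by positivity
  obtain ⟨k1, hk1⟩ := one_sided hp1 hp2 hν hK (U := fun i j ω => max (X (i + 1) (j + 1) ω) 0)
    (fun i j => mp.measurable.comp (hXm i j)) (fun _ _ _ => le_max_right _ _)
    (fun g hg => rectVar_of_monotone hmeas hC (hg.comp mp)) (fun i j => (partp i j).2.1)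
    (fun i j => (partp i j).2.2) (show 0 < ε / 32 by positivity)
  obtain ⟨k2, hk2⟩ := one_sided hp1 hp2 hν hK (U := fun i j ω => max (-X (i + 1) (j + 1) ω) 0)
    (fun i j => mn.measurable.comp (hXm i j)) (fun _ _ _ => le_max_right _ _)
    (fun g hg => rectVar_of_antitone hmeas hC (hg.comp_antitone mn)) (fun i j => (partn i j).2.1)
    (fun i j => (partn i j).2.2) (show 0 < ε / 32 by positivity)
  refine ⟨2 ^ (k1 + k2), fun m n hm hn hmn => ?_⟩
  -- the smallest convenient dyadic rectangle containing `m × n`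
  set M := Nat.log 2 m + 1 with hM
  set N := Nat.log 2 n + 1 with hN
  have mM : m ≤ 2 ^ M := (Nat.lt_pow_succ_log_self (by norm_num) m).le
  have nN : n ≤ 2 ^ N := (Nat.lt_pow_succ_log_self (by norm_num) n).le
  have hk : k1 + k2 ≤ M + N := by
    rcases le_max_iff.1 hmn with h | h
    · have := Nat.le_log_of_pow_le (by norm_num) h; omega
    · have := Nat.le_log_of_pow_le (by norm_num) h; omega
  have h4 : (2 : ℝ) ^ (M + N) ≤ 4 * ((m * n : ℕ) : ℝ) := by
    have a1 := Nat.pow_log_le_self 2 (show m ≠ 0 by omega)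
    have a2 := Nat.pow_log_le_self 2 (show n ≠ 0 by omega)
    have : 2 ^ (M + N) ≤ 4 * (m * n) := by
      calc 2 ^ (M + N) = 4 * (2 ^ Nat.log 2 m * 2 ^ Nat.log 2 n) := by rw [hM, hN]; ring
        _ ≤ _ := by gcongr
    exact_mod_cast this
  have hmn0 : (0 : ℝ) < ((m * n : ℕ) : ℝ) := by
    have : 0 < m * n := Nat.mul_pos hm hn
    exact_mod_cast this
  obtain ⟨R, hR0, hRm, hRi, hRle, hR⟩ := hk1 M N (by omega)
  obtain ⟨T, hT0, hTm, hTi, hTle, hT⟩ := hk2 M N (by omega)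
  obtain ⟨b1, b2⟩ := integral_add_rpow_le hp1 hp2 hR0 hT0 hRm hTm hRi hTi
  have hmax : ∀ ω, maxDS (fun i j => X i j ω - ∫ ω', X i j ω') m n ≤ R ω + T ω := by
    intro ω
    refine maxDS_le (add_nonneg (hR0 ω) (hT0 ω)) fun u hu v hv => ?_
    have hsplit : ∑ i ∈ range u, ∑ j ∈ range v,
        (X (i + 1) (j + 1) ω - ∫ ω', X (i + 1) (j + 1) ω')
        = blk (fun x => x) (fun i j ω => max (X (i + 1) (j + 1) ω) 0) 0 0 u v ω
        - blk (fun x => x) (fun i j ω => max (-X (i + 1) (j + 1) ω) 0) 0 0 u v ω := by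
      simp only [blk, zero_add, ← Finset.sum_sub_distrib]
      refine Finset.sum_congr rfl fun i _ => Finset.sum_congr rfl fun j _ => ?_
      have hpm : ∀ x : ℝ, x = max x 0 - max (-x) 0 := fun x =>
        (max_zero_sub_eq_self x).symm
      have : ∫ ω', X (i + 1) (j + 1) ω' = (∫ ω', max (X (i + 1) (j + 1) ω') 0)
          - ∫ ω', max (-X (i + 1) (j + 1) ω') 0 := by
        rw [← integral_sub (partp i j).1 (partn i j).1]
        congr 1
        ext ω'
        exact hpm _
      rw [this]
      linear_combination hpm (X (i + 1) (j + 1) ω)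
    rw [hsplit]
    exact (abs_sub _ _).trans (add_le_add (hR ω u (hu.trans mM) v (hv.trans nN))
      (hT ω u (hu.trans mM) v (hv.trans nN)))
  calc ∫ ω, (maxDS (fun i j => X i j ω - ∫ ω', X i j ω') m n / ((m * n : ℕ) : ℝ) ^ (1 / p)) ^ p
      ≤ ∫ ω, (R ω + T ω) ^ p / ((m * n : ℕ) : ℝ) := by
        refine integral_mono_of_nonneg (Eventually.of_forall fun ω => Real.rpow_nonneg
          (div_nonneg (maxDS_nonneg _ _ _) (by positivity)) _) (b1.div_const _)
          (Eventually.of_forall fun ω => ?_)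
        have h0 := maxDS_nonneg (fun i j => X i j ω - ∫ ω', X i j ω') m n
        simp only
        rw [Real.div_rpow h0 (by positivity), ← Real.rpow_mul hmn0.le, one_div_mul_cancel hp0.ne',
          Real.rpow_one]
        have := Real.rpow_le_rpow h0 (hmax ω) hp0.le
        gcongr
    _ ≤ ε := by
        rw [integral_div, div_le_iff₀ hmn0]
        refine b2.trans ?_
        nlinarith
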